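/- Let {F_n} be the Fibonacci sequence with F_0 = F_1 = 1. Then the real number ξ2 = ∏_{n=3}^∞ (1 - 1/F_n) is transcendental over ℚ. -/

import Mathlib

open scoped BigOperators

noncomputable section

/-- Fibonacci sequence with `F 0 = F 1 = 1`. -/
def F : ℕ → ℕ
  | 0 => 1
  | 1 => 1
  | n + 2 => F (n + 1) + F n

/-- The golden ratio conjugate `β = (√5 - 1)/2`. -/
noncomputable def β : ℝ := (Real.sqrt 5 - 1) / 2

/-- Jacobi theta function `θ₂(q) = 2 q^{1/4} ∑_{n≥0} q^{n(n+1)}`. -/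
noncomputable def θ2 (q : ℝ) : ℝ := 2 * q ^ ((1 : ℝ) / 4) * ∑' n : ℕ, q ^ (n * (n + 1))

/-- Jacobi theta function `θ₃(q) = 1 + 2 ∑_{n≥1} q^{n²}`. -/
noncomputable def θ3 (q : ℝ) : ℝ := 1 + 2 * ∑' n : ℕ, q ^ ((n + 1) ^ 2)

/-- Jacobi theta function `θ₄(q) = 1 + 2 ∑_{n≥1} (-1)^n q^{n²}`. -/
noncomputable def θ4 (q : ℝ) : ℝ := 1 + 2 * ∑' n : ℕ, (-1 : ℝ) ^ (n + 1) * q ^ ((n + 1) ^ 2)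

/-!
Let `E(q) = ∏ (1 - qⁿ)` and `D(q) = q E(q)²⁴`, so that `D(e^{2πiτ}) = Δ(τ)`, and let `q₀ = β²`.

*Reduction to modular forms.* By Binet's formula the factors `1 - 1 / Fₙ` split into factors
`1 ± q₀ᵏ`, and the product telescopes to an algebraic multiple of `E(q₀)³ E(q₀⁴) / E(q₀²)²`. So if
`ξ₂` is algebraic, then so is the value `c = D(q₀)³ D(q₀⁴) / D(q₀²)²` of a modular function of
weight `24`. We show that this is impossible at every algebraic integer `q₀` with `0 < |q₀| < 1`.

*Auxiliary function.* For a parameter `s` and `W = s⁴`, look for a nonzero integer combination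
`G(z) = ∑ a(l,i,j) zˡ D(z)²ⁱ D(z²)²ʲ`, `l, i, j < W`, which vanishes at `q₀ᵖ` for all odd primes
`p ≤ s³`. As `D(q)³ D(q⁴) / D(q²)²` takes the algebraic value `c` at `q₀`, the number `G(q₀ᵖ)` is,
up to a nonzero factor, the value at `q₀` of a modular form of weight `96 W` on `Γ₀(4 p)`, whose
Fourier coefficients are integer combinations of products of powers of `q₀` and `c`. By Sturm's
bound this form is zero as soon as its first `O(W p)` coefficients vanish. These are `O(s¹⁰)` linear
equations in `s¹²` unknowns, and Siegel's lemma solves them with `log |a| = O(s⁵)`.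

*Zero estimate.* `G` vanishes at `0` to an order less than `s³⁰`. Otherwise `G(e^{-2πy})` is
extremely small for a range of small `y`. The transformation `Δ(-1/τ) = τ¹² Δ(τ)` shows that, up to
explicit factors, `G(e^{-2πy})` is close to an exponential polynomial with integer data. This one
satisfies a linear recurrence on a grid of points, so it remains small along the grid, up to a
moderately large `y`; there, however, its leading term dominates and it is not small.

*Contradiction.* The first nonzero Taylor coefficient of `G` is an integer, so it is at least `1` in
absolute value. Dividing by the zeros `q₀ᵖ` and applying the maximum principle on a circle of radius
`1 - 1 / (M + 2)`, with `M` the order of vanishing, bounds it by `exp (O(s⁵)) |q₀| ^ ∑ p`. By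
Chebyshev's lower bound for the number of primes, `∑ p` exceeds `s⁵` by a power of `s`, which is
absurd for large `s`.
-/

namespace Xi2

/-! ### Siegel's lemma over the algebraic integers -/

section Siegel

lemma abs_sum_mul_le {ι : Type*} {s : Finset ι} {v w : ι → ℤ} {B C : ℤ} (hB : 0 ≤ B)
    (hv : ∀ j ∈ s, |v j| ≤ B) (hw : ∑ j ∈ s, |w j| ≤ C) : |∑ j ∈ s, v j * w j| ≤ B * C :=
  calc |∑ j ∈ s, v j * w j| ≤ ∑ j ∈ s, |v j * w j| := Finset.abs_sum_le_sum_abs _ _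
    _ ≤ ∑ j ∈ s, B * |w j| := Finset.sum_le_sum fun j hj => by
        rw [abs_mul]
        exact mul_le_mul_of_nonneg_right (hv j hj) (abs_nonneg _)
    _ ≤ B * C := by
        rw [← Finset.mul_sum]
        exact mul_le_mul_of_nonneg_left hw hB

/-- Multiplication by each factor acts on the generators `e` through an integer matrix. -/
lemma exists_coeffs_list_prod {R : Type*} [CommRing R] [Module.Finite ℤ R] (S : Finset R) :
    ∃ (d : ℕ) (e : Fin d → R) (A : ℕ), 1 ≤ A ∧ ∀ l : List R, (∀ x ∈ l, x ∈ S) →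
      ∃ v : Fin d → ℤ, (∀ i, |v i| ≤ (A : ℤ) ^ (l.length + 1)) ∧ l.prod = ∑ i, v i • e i := by
  obtain ⟨d, e, he⟩ := Module.Finite.exists_fin (R := ℤ) (M := R)
  have coords : ∀ y : R, ∃ v : Fin d → ℤ, ∑ i, v i • e i = y := fun y =>
    (Submodule.mem_span_range_iff_exists_fun ℤ).1 (he ▸ Submodule.mem_top)
  choose c hc using coords
  let A : ℕ := 1 + ∑ i, (c 1 i).natAbs + ∑ x ∈ S, ∑ i, ∑ j, (c (x * e j) i).natAbs
  have one_le : ∀ i, |c 1 i| ≤ A := fun i => by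
    have := Finset.single_le_sum_of_canonicallyOrdered (f := fun i => (c 1 i).natAbs)
      (Finset.mem_univ i)
    rw [Int.abs_eq_natAbs]
    exact_mod_cast (by simp only [A]; omega : (c 1 i).natAbs ≤ A)
  have mul_le : ∀ x ∈ S, ∀ i, ∑ j, |c (x * e j) i| ≤ A := fun x hx i => by
    have h1 := Finset.single_le_sum_of_canonicallyOrdered
      (f := fun x => ∑ i, ∑ j, (c (x * e j) i).natAbs) hx
    have h2 := Finset.single_le_sum_of_canonicallyOrdered
      (f := fun i => ∑ j, (c (x * e j) i).natAbs) (Finset.mem_univ i)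
    simp only [Int.abs_eq_natAbs]
    exact_mod_cast (by simp only [A]; omega : ∑ j, (c (x * e j) i).natAbs ≤ A)
  refine ⟨d, e, A, by simp only [A]; omega, fun l => ?_⟩
  induction l with
  | nil => exact fun _ => ⟨c 1, by simpa using one_le, (hc 1).symm⟩
  | cons x l ih =>
    intro hl
    obtain ⟨v, hv, hlv⟩ := ih fun y hy => hl y (List.mem_cons_of_mem x hy)
    refine ⟨fun i => ∑ j, v j * c (x * e j) i, fun i => ?_, ?_⟩
    · rw [List.length_cons, pow_succ]
      exact abs_sum_mul_le (by positivity) (fun j _ => hv j) (mul_le x (hl x List.mem_cons_self) i)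
    · rw [List.prod_cons, hlv, Finset.mul_sum]
      calc ∑ j, x * v j • e j = ∑ j, v j • ∑ i, c (x * e j) i • e i := by
            simp only [hc, mul_smul_comm]
        _ = ∑ i, (∑ j, v j * c (x * e j) i) • e i := by
            simp only [Finset.smul_sum, smul_smul, Finset.sum_smul]
            exact Finset.sum_comm

lemma exists_coeffs_pow_mul_pow {R : Type*} [CommRing R] {x y : R} (hx : IsIntegral ℤ x)
    (hy : IsIntegral ℤ y) :
    ∃ (d : ℕ) (e : Fin d → R) (A : ℕ), 1 ≤ A ∧ ∀ u v : ℕ,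
      ∃ w : Fin d → ℤ, (∀ i, |w i| ≤ (A : ℤ) ^ (u + v + 1)) ∧ x ^ u * y ^ v = ∑ i, w i • e i := by
  classical
  have : Module.Finite ℤ (Algebra.adjoin ℤ {x, y}) :=
    Algebra.finite_adjoin_of_finite_of_isIntegral (Set.toFinite _) (by
      rintro z (rfl | rfl) <;> assumption)
  let x' : Algebra.adjoin ℤ {x, y} := ⟨x, Algebra.subset_adjoin (by simp)⟩
  let y' : Algebra.adjoin ℤ {x, y} := ⟨y, Algebra.subset_adjoin (by simp)⟩
  obtain ⟨d, e, A, hA, hcoeff⟩ := exists_coeffs_list_prod {x', y'}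
  refine ⟨d, fun i => e i, A, hA, fun u v => ?_⟩
  obtain ⟨w, hw, hprod⟩ := hcoeff (List.replicate u x' ++ List.replicate v y') fun z hz => by
    rcases List.mem_append.1 hz with hz | hz <;> simp [List.eq_of_mem_replicate hz]
  exact ⟨w, by simpa using hw, by simpa [x', y'] using congrArg Subtype.val hprod⟩

attribute [local instance] Matrix.seminormedAddCommGroup

lemma exists_mulVec_eq_zero_abs_le_exp {α ι : Type*} [Fintype α] [Fintype ι] [Nonempty α]
    (A : Matrix α ι ℤ) (hcard : 2 * Fintype.card α ≤ Fintype.card ι) {T : ℝ} (hT : 0 ≤ T)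
    (hA : ∀ i j, |(A i j : ℝ)| ≤ Real.exp T) :
    ∃ a : ι → ℤ, a ≠ 0 ∧ A.mulVec a = 0 ∧ ∀ j, |(a j : ℝ)| ≤
      Real.exp ((T + Real.log (Fintype.card ι)) * (2 * Fintype.card α / Fintype.card ι)) := by
  have hm : 0 < Fintype.card α := Fintype.card_pos
  obtain ⟨a, ha0, ha, hnorm⟩ := Int.Matrix.exists_ne_zero_int_vec_norm_le A (by omega) hm
  refine ⟨a, ha0, ha, fun j => ?_⟩
  set m := (Fintype.card α : ℝ)
  set n := (Fintype.card ι : ℝ)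
  have hm1 : 1 ≤ m := Nat.one_le_cast.2 hm
  have hmn : 2 * m ≤ n := by simp only [m, n]; exact_mod_cast hcard
  have hmax : max 1 ‖A‖ ≤ Real.exp T := max_le (Real.one_le_exp hT) <|
    (Matrix.norm_le_iff (Real.exp_pos T).le).2 fun i j => (Int.norm_eq_abs _).trans_le (hA i j)
  have hbase : n * max 1 ‖A‖ ≤ Real.exp (T + Real.log n) := by
    rw [add_comm, Real.exp_add, Real.exp_log (by linarith)]
    gcongr
  calc |(a j : ℝ)| = ‖a j‖ := (Int.norm_eq_abs _).symm
    _ ≤ ‖a‖ := norm_le_pi_norm a j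
    _ ≤ (n * max 1 ‖A‖) ^ (m / (n - m)) := hnorm
    _ ≤ Real.exp (T + Real.log n) ^ (m / (n - m)) :=
        Real.rpow_le_rpow (by positivity) hbase (div_nonneg (by linarith) (by linarith))
    _ = Real.exp ((T + Real.log n) * (m / (n - m))) := (Real.exp_mul _ _).symm
    _ ≤ Real.exp ((T + Real.log n) * (2 * m / n)) := by
        have hlog := Real.log_nonneg (show 1 ≤ n by linarith)
        refine Real.exp_le_exp.2 (mul_le_mul_of_nonneg_left ?_ (add_nonneg hT hlog))
        rw [div_le_div_iff₀ (by linarith) (by linarith)]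
        nlinarith

/-- Writing the monomials in terms of generators of `ℤ[x, y]` turns each equation into `d` equations
with integer coefficients. -/
lemma exists_sum_mul_monomial_eq_zero {R : Type*} [CommRing R] [Nontrivial R] {x y : R}
    (hx : IsIntegral ℤ x) (hy : IsIntegral ℤ y) :
    ∃ d A : ℕ, 1 ≤ A ∧ 1 ≤ d ∧ ∀ (ε ι : Type) [Fintype ε] [Fintype ι] [Nonempty ε]
      (f : ε → ι → ℤ) (u v : ε → ι → ℕ) (T : ℝ) (U : ℕ), 0 ≤ T → (∀ e i, u e i + v e i < U) →
      (∀ e i, |(f e i : ℝ)| ≤ Real.exp T) → 2 * (d * Fintype.card ε) ≤ Fintype.card ι →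
      ∃ a : ι → ℤ, a ≠ 0 ∧
        (∀ i, |(a i : ℝ)| ≤ Real.exp ((T + U * Real.log A + Real.log (Fintype.card ι)) *
          (2 * (d * Fintype.card ε) / Fintype.card ι))) ∧
        ∀ e, ∑ i, (a i : R) * ((f e i : R) * x ^ u e i * y ^ v e i) = 0 := by
  obtain ⟨d, g, A, hA, monomial⟩ := exists_coeffs_pow_mul_pow hx hy
  choose w hw hmonomial using monomial
  have hd : d ≠ 0 := by
    rintro rfl
    exact one_ne_zero (α := R) (by simpa using hmonomial 0 0)
  have : NeZero d := ⟨hd⟩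
  refine ⟨d, A, hA, Nat.one_le_iff_ne_zero.2 hd, ?_⟩
  intro ε ι _ _ _ f u v T U hT hU hf hcard
  have hA' : (1 : ℝ) ≤ A := Nat.one_le_cast.2 hA
  let M : Matrix (ε × Fin d) ι ℤ := fun e i => f e.1 i * w (u e.1 i) (v e.1 i) e.2
  have hMcard : Fintype.card (ε × Fin d) = d * Fintype.card ε := by
    rw [Fintype.card_prod, Fintype.card_fin, mul_comm]
  have hM : ∀ e i, |(M e i : ℝ)| ≤ Real.exp (T + U * Real.log A) := fun e i => by
    have hwU : |(w (u e.1 i) (v e.1 i) e.2 : ℝ)| ≤ (A : ℝ) ^ U :=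
      (show _ ≤ (A : ℝ) ^ _ by exact_mod_cast hw _ _ _).trans (pow_le_pow_right₀ hA' (hU _ _))
    rw [Real.exp_add, ← Real.log_pow, Real.exp_log (by positivity)]
    simp only [M, Int.cast_mul, abs_mul]
    exact mul_le_mul (hf _ _) hwU (abs_nonneg _) (Real.exp_pos T).le
  obtain ⟨a, ha0, ha, hbound⟩ := exists_mulVec_eq_zero_abs_le_exp M (hMcard ▸ hcard)
    (add_nonneg hT (mul_nonneg U.cast_nonneg (Real.log_nonneg hA'))) hM
  refine ⟨a, ha0, fun i => by simpa [hMcard] using hbound i, fun e => ?_⟩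
  have hrow : ∀ j, ∑ i, M (e, j) i * a i = 0 := fun j => congrFun ha (e, j)
  calc ∑ i, (a i : R) * ((f e i : R) * x ^ u e i * y ^ v e i)
      = ∑ i, ∑ j, (M (e, j) i * a i) • g j := by
        refine Finset.sum_congr rfl fun i _ => ?_
        rw [mul_assoc, hmonomial, Finset.mul_sum, Finset.mul_sum]
        refine Finset.sum_congr rfl fun j _ => ?_
        simp only [M, zsmul_eq_mul]
        push_cast
        ring
    _ = ∑ j, (∑ i, M (e, j) i * a i) • g j := by
        rw [Finset.sum_comm]
        simp only [Finset.sum_smul]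
    _ = 0 := by simp only [hrow, zero_smul, Finset.sum_const_zero]

end Siegel

/-! ### Power series on the unit disc -/

section DiscSeries

open Metric

/-- On the open unit disc, `f` is the sum of the power series with coefficients `a`; nothing is
said about `f` elsewhere. -/
def HasDiscSeries (a : ℕ → ℂ) (f : ℂ → ℂ) : Prop :=
  ∀ z : ℂ, ‖z‖ < 1 → HasSum (fun n => a n * z ^ n) (f z)

/-- On the open unit disc, `f` is the sum of a power series with integer coefficients. -/
def HasIntDiscSeries (f : ℂ → ℂ) : Prop :=
  ∃ a : ℕ → ℤ, HasDiscSeries (fun n => (a n : ℂ)) f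

lemma one_div_one_sub_add_one_div_add_two (m : ℕ) :
    1 / (1 - ((m : ℝ) + 1) / (m + 2)) = m + 2 := by
  field_simp
  ring

lemma add_two_div_add_one_pow_le_four (m : ℕ) : (((m : ℝ) + 2) / (m + 1)) ^ m ≤ 4 := by
  have hexp : ((m : ℝ) + 2) / (m + 1) ≤ Real.exp (1 / (m + 1)) := by
    refine le_of_eq_of_le ?_ (Real.add_one_le_exp (1 / ((m : ℝ) + 1)))
    field_simp
    ring
  calc (((m : ℝ) + 2) / (m + 1)) ^ m
      ≤ Real.exp (1 / (m + 1)) ^ m := pow_le_pow_left₀ (by positivity) hexp m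
    _ = Real.exp (m * (1 / (m + 1))) := (Real.exp_nat_mul _ _).symm
    _ ≤ Real.exp 1 := by
      rw [Real.exp_le_exp, mul_one_div, div_le_one (by positivity)]
      linarith
    _ ≤ 4 := by linarith [Real.exp_one_lt_d9]

namespace HasDiscSeries

variable {a : ℕ → ℂ} {f : ℂ → ℂ}

lemma hasFPowerSeriesOnBall (h : HasDiscSeries a f) :
    HasFPowerSeriesOnBall f (FormalMultilinearSeries.ofScalars ℂ a) 0 1 where
  r_le := by
    refine ENNReal.le_of_forall_nnreal_lt fun r hr => ?_
    apply FormalMultilinearSeries.le_radius_of_tendsto (l := 0)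
    have hr1 : ‖((r : ℝ) : ℂ)‖ < 1 := by
      rw [Complex.norm_real]
      simpa using hr
    have := (h _ hr1).summable.tendsto_atTop_zero.norm
    simpa [FormalMultilinearSeries.ofScalars_norm] using this
  r_pos := one_pos
  hasSum := by
    intro y hy
    rw [← ENNReal.ofReal_one, eball_ofReal, mem_ball_zero_iff] at hy
    simpa [FormalMultilinearSeries.ofScalars_apply_eq, mul_comm] using h y hy

lemma differentiableOn (h : HasDiscSeries a f) : DifferentiableOn ℂ f (ball 0 1) := by
  simpa only [← ENNReal.ofReal_one, eball_ofReal] using h.hasFPowerSeriesOnBall.differentiableOn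

lemma diffContOnCl (h : HasDiscSeries a f) {r : ℝ} (hr : r < 1) :
    DiffContOnCl ℂ f (ball 0 r) :=
  (h.differentiableOn.mono
    (closure_ball_subset_closedBall.trans (closedBall_subset_ball hr))).diffContOnCl

lemma apply_zero (h : HasDiscSeries a f) : f 0 = a 0 := by
  refine (h 0 (by simp)).unique ?_
  simpa using hasSum_single (f := fun n => a n * (0 : ℂ) ^ n) 0 (fun n hn => by simp [hn])

lemma exists_eq_pow_mul (h : HasDiscSeries a f) {M : ℕ} (ha : ∀ n < M, a n = 0) :
    ∃ g : ℂ → ℂ, HasDiscSeries (fun n => a (n + M)) g ∧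
      ∀ z : ℂ, ‖z‖ < 1 → f z = z ^ M * g z := by
  have hsum : ∀ z : ℂ, ‖z‖ < 1 → Summable fun n => a (n + M) * z ^ n := by
    intro z hz
    rcases eq_or_ne z 0 with rfl | hz0
    · exact summable_of_ne_finset_zero (s := {0}) fun b hb => by
        rw [zero_pow (by simpa using hb), mul_zero]
    · refine (((summable_nat_add_iff M).2 (h z hz).summable).mul_left (z ^ M)⁻¹).congr fun n => ?_
      field_simp
      ring
  refine ⟨fun z => ∑' n, a (n + M) * z ^ n, fun z hz => (hsum z hz).hasSum, fun z hz => ?_⟩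
  rw [← (h z hz).tsum_eq, ← (h z hz).summable.sum_add_tsum_nat_add M,
    Finset.sum_eq_zero (fun i hi => by rw [ha i (Finset.mem_range.1 hi), zero_mul]), zero_add,
    ← tsum_mul_left]
  exact tsum_congr fun n => by ring

lemma norm_le_of_norm_le_on_circle (h : HasDiscSeries a f) {r M : ℝ} (hr0 : 0 < r) (hr : r < 1)
    (hM : ∀ z : ℂ, ‖z‖ = r → ‖f z‖ ≤ M) {z : ℂ} (hz : ‖z‖ ≤ r) : ‖f z‖ ≤ M := by
  refine Complex.norm_le_of_forall_mem_frontier_norm_le isBounded_ball (h.diffContOnCl hr)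
    (fun w hw => hM w ?_) ?_
  · rwa [frontier_ball _ hr0.ne', mem_sphere_zero_iff_norm] at hw
  · rwa [closure_ball _ hr0.ne', mem_closedBall_zero_iff]

lemma norm_le_div_pow_mul (h : HasDiscSeries a f) {M : ℕ} (ha : ∀ n < M, a n = 0) {r B : ℝ}
    (hr0 : 0 < r) (hr : r < 1) (hB : ∀ z : ℂ, ‖z‖ = r → ‖f z‖ ≤ B) {z : ℂ} (hz : ‖z‖ ≤ r) :
    ‖f z‖ ≤ (‖z‖ / r) ^ M * B := by
  obtain ⟨g, hg, hfg⟩ := h.exists_eq_pow_mul ha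
  have hcircle : ∀ w : ℂ, ‖w‖ = r → ‖g w‖ ≤ B / r ^ M := by
    intro w hw
    rw [le_div_iff₀' (pow_pos hr0 M), ← hw, ← norm_pow, ← norm_mul, ← hfg w (hw ▸ hr)]
    exact hB w hw
  rw [hfg z (hz.trans_lt hr), norm_mul, norm_pow, div_pow, div_mul_eq_mul_div, mul_div_assoc]
  exact mul_le_mul_of_nonneg_left (hg.norm_le_of_norm_le_on_circle hr0 hr hcircle hz)
    (pow_nonneg (norm_nonneg z) M)

lemma norm_coeff_le (h : HasDiscSeries a f) {r M : ℝ} (hr0 : 0 < r) (hr : r < 1)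
    (hM : ∀ z : ℂ, ‖z‖ = r → ‖f z‖ ≤ M) (n : ℕ) : ‖a n‖ ≤ M / r ^ n := by
  have hCauchy := Complex.norm_iteratedDeriv_le_of_forall_mem_sphere_norm_le (c := 0) (n := n) hr0
    (h.diffContOnCl hr) (fun z hz => hM z (by simpa using hz))
  have hderiv := h.hasFPowerSeriesOnBall.factorial_smul 1 n
  rw [FormalMultilinearSeries.apply_eq_prod_smul_coeff,
    FormalMultilinearSeries.coeff_ofScalars] at hderiv
  simp only [Finset.prod_const_one, one_smul, ← iteratedDeriv_eq_iteratedFDeriv] at hderiv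
  rw [← hderiv, nsmul_eq_mul, norm_mul, Complex.norm_natCast, mul_div_assoc] at hCauchy
  exact le_of_mul_le_mul_left hCauchy (by exact_mod_cast n.factorial_pos)

lemma norm_coeff_le_of_growth (h : HasDiscSeries a f) {A : ℝ} (hA : 0 ≤ A) {n : ℕ}
    (hf : ∀ z : ℂ, ‖z‖ < 1 → ‖f z‖ ≤ A * (1 / (1 - ‖z‖)) ^ n) (m : ℕ) :
    ‖a m‖ ≤ 4 * A * ((m : ℝ) + 2) ^ n := by
  have hr1 : ((m : ℝ) + 1) / (m + 2) < 1 := by rw [div_lt_one (by positivity)]; linarith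
  have hCauchy := h.norm_coeff_le (by positivity) hr1 (M := A * ((m : ℝ) + 2) ^ n) (fun z hz => by
    simpa only [hz, one_div_one_sub_add_one_div_add_two] using hf z (by rwa [hz])) m
  calc ‖a m‖ ≤ A * ((m : ℝ) + 2) ^ n / (((m : ℝ) + 1) / (m + 2)) ^ m := hCauchy
    _ = A * ((m : ℝ) + 2) ^ n * (((m : ℝ) + 2) / (m + 1)) ^ m := by
      rw [div_eq_mul_inv, ← inv_pow, inv_div]
    _ ≤ A * ((m : ℝ) + 2) ^ n * 4 :=
      mul_le_mul_of_nonneg_left (add_two_div_add_one_pow_le_four m) (by positivity)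
    _ = 4 * A * ((m : ℝ) + 2) ^ n := by ring

end HasDiscSeries

namespace HasIntDiscSeries

variable {f g : ℂ → ℂ}

lemma congr (hf : HasIntDiscSeries f) (hfg : ∀ z : ℂ, ‖z‖ < 1 → f z = g z) :
    HasIntDiscSeries g := by
  obtain ⟨a, ha⟩ := hf
  exact ⟨a, fun z hz => hfg z hz ▸ ha z hz⟩

lemma const (c : ℤ) : HasIntDiscSeries fun _ => (c : ℂ) := by
  refine ⟨fun n => if n = 0 then c else 0, fun z _ => ?_⟩
  convert hasSum_ite_eq 0 (c : ℂ) using 2 with n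
  by_cases h : n = 0 <;> simp [h]

lemma id : HasIntDiscSeries fun z => z := by
  refine ⟨fun n => if n = 1 then 1 else 0, fun z _ => ?_⟩
  convert hasSum_ite_eq 1 z using 2 with n
  by_cases h : n = 1 <;> simp [h]

lemma mul (hf : HasIntDiscSeries f) (hg : HasIntDiscSeries g) :
    HasIntDiscSeries fun z => f z * g z := by
  obtain ⟨a, ha⟩ := hf
  obtain ⟨b, hb⟩ := hg
  refine ⟨fun n => ∑ kl ∈ Finset.HasAntidiagonal.antidiagonal n, a kl.1 * b kl.2, fun z hz => ?_⟩
  have hfz := (ha z hz).summable.norm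
  have hgz := (hb z hz).summable.norm
  have hprod := (summable_norm_sum_mul_antidiagonal_of_summable_norm hfz hgz).of_norm.hasSum
  rw [← tsum_mul_tsum_eq_tsum_sum_antidiagonal_of_summable_norm hfz hgz, (ha z hz).tsum_eq,
    (hb z hz).tsum_eq] at hprod
  refine hprod.congr_fun fun n => ?_
  push_cast
  rw [Finset.sum_mul]
  refine Finset.sum_congr rfl fun kl hkl => ?_
  rw [← Finset.HasAntidiagonal.mem_antidiagonal.1 hkl, pow_add]
  ring

lemma pow (hf : HasIntDiscSeries f) (n : ℕ) : HasIntDiscSeries fun z => f z ^ n := by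
  induction n with
  | zero => simpa using const 1
  | succ n ih => simpa only [pow_succ] using ih.mul hf

lemma sum {ι : Type*} (s : Finset ι) (f : ι → ℂ → ℂ) (hf : ∀ i ∈ s, HasIntDiscSeries (f i)) :
    HasIntDiscSeries fun z => ∑ i ∈ s, f i z := by
  classical
  choose! a ha using hf
  refine ⟨fun n => ∑ i ∈ s, a i n, fun z hz => ?_⟩
  convert hasSum_sum (fun i hi => ha i hi z hz) using 2 with n
  push_cast
  rw [Finset.sum_mul]

lemma comp_pow (hf : HasIntDiscSeries f) {d : ℕ} (hd : d ≠ 0) :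
    HasIntDiscSeries fun z => f (z ^ d) := by
  obtain ⟨a, ha⟩ := hf
  refine ⟨fun n => if d ∣ n then a (n / d) else 0, fun z hz => ?_⟩
  have hzd := ha (z ^ d) (by rw [norm_pow]; exact pow_lt_one₀ (norm_nonneg _) hz hd)
  have hd0 := Nat.pos_of_ne_zero hd
  have hinj : Function.Injective (fun n : ℕ => d * n) := fun _ _ h =>
    Nat.eq_of_mul_eq_mul_left hd0 h
  rw [← hinj.hasSum_iff]
  · convert hzd using 2 with n
    simp [hd0, pow_mul]
  · intro m hm
    have : ¬ d ∣ m := fun ⟨c, hc⟩ => hm ⟨c, hc.symm⟩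
    simp [this]

end HasIntDiscSeries

lemma norm_pow_lt_one {z : ℂ} (hz : ‖z‖ < 1) {d : ℕ} (hd : d ≠ 0) : ‖z ^ d‖ < 1 := by
  rw [norm_pow]
  exact pow_lt_one₀ (norm_nonneg _) hz hd

lemma exists_eq_prod_sub_mul (S : Finset ℂ) (hS : ∀ x ∈ S, ‖x‖ < 1) {G : ℂ → ℂ}
    (hG : DifferentiableOn ℂ G (ball 0 1)) (h0 : ∀ x ∈ S, G x = 0) :
    ∃ H : ℂ → ℂ, DifferentiableOn ℂ H (ball 0 1) ∧ ∀ z, G z = (∏ x ∈ S, (z - x)) * H z := by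
  induction S using Finset.induction_on with
  | empty => exact ⟨G, hG, by simp⟩
  | insert x S hx ih =>
    obtain ⟨H, hH, hGH⟩ := ih (fun y hy => hS y (Finset.mem_insert_of_mem hy))
      (fun y hy => h0 y (Finset.mem_insert_of_mem hy))
    have hHx : H x = 0 := by
      have hGx := h0 x (Finset.mem_insert_self _ _)
      rw [hGH] at hGx
      refine (mul_eq_zero.1 hGx).resolve_left (Finset.prod_ne_zero_iff.2 fun y hy => ?_)
      exact sub_ne_zero.2 fun h => hx (h ▸ hy)
    refine ⟨dslope H x, (Complex.differentiableOn_dslope (isOpen_ball.mem_nhds ?_)).2 hH,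
      fun z => ?_⟩
    · simpa using hS x (Finset.mem_insert_self _ _)
    · have hslope := sub_smul_dslope_of_zero hHx z
      rw [smul_eq_mul] at hslope
      rw [hGH, Finset.prod_insert hx, ← hslope]
      ring

lemma norm_apply_zero_le_of_zeros (S : Finset ℂ) (hS : ∀ x ∈ S, ‖x‖ ≤ 1 / 4) {G : ℂ → ℂ}
    (hG : DifferentiableOn ℂ G (ball 0 1)) (h0 : ∀ x ∈ S, G x = 0) {r B : ℝ} (hr : 1 / 2 ≤ r)
    (hr1 : r < 1) (hB : ∀ z, ‖z‖ = r → ‖G z‖ ≤ B) :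
    ‖G 0‖ ≤ B * 4 ^ S.card * ∏ x ∈ S, ‖x‖ := by
  obtain ⟨H, hH, hGH⟩ :=
    exists_eq_prod_sub_mul S (fun x hx => (hS x hx).trans_lt (by norm_num)) hG h0
  have hHcl : DiffContOnCl ℂ H (ball 0 r) :=
    (hH.mono (closure_ball_subset_closedBall.trans (closedBall_subset_ball hr1))).diffContOnCl
  have hHle : ∀ z ∈ frontier (ball (0 : ℂ) r), ‖H z‖ ≤ B * 4 ^ S.card := by
    intro z hz
    rw [frontier_ball _ (by linarith), mem_sphere_zero_iff_norm] at hz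
    have hGz := hB z hz
    rw [hGH, norm_mul, norm_prod] at hGz
    have hprod : ((1 : ℝ) / 4) ^ S.card ≤ ∏ x ∈ S, ‖z - x‖ := by
      rw [← Finset.prod_const]
      refine Finset.prod_le_prod (fun _ _ => by norm_num) fun x hx => ?_
      linarith [norm_sub_norm_le z x, hS x hx]
    have hHz := (mul_le_mul_of_nonneg_right hprod (norm_nonneg _)).trans hGz
    rwa [one_div, inv_pow, inv_mul_le_iff₀ (by positivity), mul_comm] at hHz
  have hH0 := Complex.norm_le_of_forall_mem_frontier_norm_le isBounded_ball hHcl hHle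
    (subset_closure (mem_ball_self (by linarith : 0 < r)))
  rw [hGH, norm_mul, norm_prod, mul_comm]
  simp only [zero_sub, norm_neg]
  exact mul_le_mul_of_nonneg_right hH0 (Finset.prod_nonneg fun _ _ => norm_nonneg _)

/-- For integer coefficients the left-hand side is at least `1`, so that a function of moderate
growth cannot have too many zeros close to the origin. -/
lemma HasDiscSeries.norm_leadingCoeff_le_of_zeros {a : ℕ → ℂ} {f : ℂ → ℂ} (h : HasDiscSeries a f)
    {A : ℝ} {n : ℕ} (hf : ∀ z : ℂ, ‖z‖ < 1 → ‖f z‖ ≤ A * (1 / (1 - ‖z‖)) ^ n)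
    {M : ℕ} (hM : ∀ n < M, a n = 0) (S : Finset ℂ) (hS : ∀ x ∈ S, x ≠ 0 ∧ ‖x‖ ≤ 1 / 4)
    (h0 : ∀ x ∈ S, f x = 0) :
    ‖a M‖ ≤ 4 * A * ((M : ℝ) + 2) ^ n * 4 ^ S.card * ∏ x ∈ S, ‖x‖ := by
  obtain ⟨G, hG, hfG⟩ := h.exists_eq_pow_mul hM
  have hr1 : ((M : ℝ) + 1) / (M + 2) < 1 := by rw [div_lt_one (by positivity)]; linarith
  have hr2 : 1 / 2 ≤ ((M : ℝ) + 1) / (M + 2) := by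
    rw [div_le_div_iff₀ two_pos (by positivity)]
    linarith [M.cast_nonneg (α := ℝ)]
  have hGS : ∀ x ∈ S, G x = 0 := fun x hx => by
    have hfx := h0 x hx
    rw [hfG x ((hS x hx).2.trans_lt (by norm_num))] at hfx
    exact (mul_eq_zero.1 hfx).resolve_left (pow_ne_zero M (hS x hx).1)
  have hcircle : ∀ z : ℂ, ‖z‖ = ((M : ℝ) + 1) / (M + 2) → ‖G z‖ ≤ 4 * A * ((M : ℝ) + 2) ^ n := by
    intro z hz
    have hz1 : ‖z‖ < 1 := by rwa [hz]
    have hfz := hf z hz1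
    rw [hz, one_div_one_sub_add_one_div_add_two] at hfz
    have hGz : ‖G z‖ = (((M : ℝ) + 2) / (M + 1)) ^ M * ‖f z‖ := by
      rw [hfG z hz1, norm_mul, norm_pow, hz, ← mul_assoc, ← mul_pow]
      field_simp
      rw [one_pow, mul_one]
    rw [hGz, mul_assoc]
    exact mul_le_mul (add_two_div_add_one_pow_le_four M) hfz (norm_nonneg _) (by norm_num)
  have hG0 := norm_apply_zero_le_of_zeros S (fun x hx => (hS x hx).2) hG.differentiableOn hGS hr2
    hr1 hcircle
  rwa [hG.apply_zero, zero_add] at hG0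

end DiscSeries

/-! ### Exponential polynomials on a grid -/

section ExpPoly

open Polynomial

/-- The shift operator `b ↦ (n ↦ b (n + 1))` on real sequences. A linear recurrence with
characteristic polynomial `P` is the equation `aeval seqShift P b = 0`. -/
def seqShift : Module.End ℝ (ℕ → ℝ) where
  toFun b n := b (n + 1)
  map_add' _ _ := rfl
  map_smul' _ _ := rfl

lemma aeval_seqShift_X_sub_C (μ : ℝ) (b : ℕ → ℝ) (n : ℕ) :
    aeval seqShift (X - C μ) b n = b (n + 1) - μ * b n := by
  simp [seqShift, Module.algebraMap_end_apply]

lemma abs_le_of_abs_sub_mul_le {μ δ : ℝ} (hμ : |μ| ≤ 1) (hδ : 0 ≤ δ) {b : ℕ → ℝ} {k : ℕ}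
    (h0 : |b 0| ≤ δ)
    (hstep : ∀ m : ℕ, |b (m + 1) - μ * b m| ≤ 2 * δ * (2 * ((m : ℝ) + 1)) ^ k) (m : ℕ) :
    |b m| ≤ δ * (1 + m * (2 * (2 * (m : ℝ)) ^ k)) := by
  induction m with
  | zero => simpa using h0
  | succ m ih =>
    have hμb : |μ * b m| ≤ |b m| := by
      rw [abs_mul]
      exact mul_le_of_le_one_left (abs_nonneg _) hμ
    calc |b (m + 1)| = |(b (m + 1) - μ * b m) + μ * b m| := by rw [sub_add_cancel]
      _ ≤ |b (m + 1) - μ * b m| + |μ * b m| := abs_add_le _ _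
      _ ≤ 2 * δ * (2 * ((m : ℝ) + 1)) ^ k + δ * (1 + m * (2 * (2 * ((m : ℝ) + 1)) ^ k)) := by
        refine add_le_add (hstep m) ((hμb.trans ih).trans ?_)
        gcongr
        linarith
      _ = δ * (1 + (m + 1 : ℕ) * (2 * (2 * ((m + 1 : ℕ) : ℝ)) ^ k)) := by
        push_cast
        ring

lemma abs_le_of_aeval_seqShift_eq_zero (s : Multiset ℝ) (hs : ∀ μ ∈ s, |μ| ≤ 1) {b : ℕ → ℝ} {δ : ℝ}
    (hδ : 0 ≤ δ) (h0 : aeval seqShift (s.map fun μ => X - C μ).prod b = 0)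
    (hb : ∀ m < s.card, |b m| ≤ δ) (m : ℕ) :
    |b m| ≤ δ * (2 * ((m : ℝ) + 1)) ^ s.card := by
  induction s using Multiset.induction_on generalizing b δ m with
  | empty =>
    have : b = 0 := by simpa using h0
    simp [this, hδ]
  | cons μ s ih =>
    have hμ : |μ| ≤ 1 := hs μ (Multiset.mem_cons_self _ _)
    rw [Multiset.card_cons] at hb ⊢
    rw [Multiset.map_cons, Multiset.prod_cons, mul_comm, map_mul, Module.End.mul_apply] at h0
    have hdiff : ∀ k < s.card, |aeval seqShift (X - C μ) b k| ≤ 2 * δ := by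
      intro k hk
      rw [aeval_seqShift_X_sub_C]
      have hμb : |μ * b k| ≤ δ := by
        rw [abs_mul]
        exact (mul_le_of_le_one_left (abs_nonneg _) hμ).trans (hb k (by omega))
      linarith [abs_sub (b (k + 1)) (μ * b k), hb (k + 1) (by omega)]
    have hstep := ih (fun ν hν => hs ν (Multiset.mem_cons_of_mem hν)) (by positivity) h0 hdiff
    simp only [aeval_seqShift_X_sub_C] at hstep
    refine (abs_le_of_abs_sub_mul_le hμ hδ (hb 0 (by omega)) hstep m).trans
      (mul_le_mul_of_nonneg_left ?_ hδ)
    have hmono : (2 * (m : ℝ)) ^ s.card ≤ (2 * ((m : ℝ) + 1)) ^ s.card := by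
      gcongr
      linarith
    have hone : (1 : ℝ) ≤ (2 * ((m : ℝ) + 1)) ^ s.card :=
      one_le_pow₀ (by linarith [m.cast_nonneg (α := ℝ)])
    rw [pow_succ]
    nlinarith [m.cast_nonneg (α := ℝ)]

lemma aeval_seqShift_X_sub_C_pow (μ : ℝ) (g : ℕ → ℝ) (n : ℕ) :
    aeval seqShift ((X - C μ) ^ n) (fun m => μ ^ m * g m) =
      fun m => μ ^ (m + n) * (fwdDiff 1)^[n] g m := by
  induction n with
  | zero => ext m; simp
  | succ n ih =>
    rw [pow_succ', map_mul, Module.End.mul_apply, ih]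
    ext m
    rw [aeval_seqShift_X_sub_C, Function.iterate_succ_apply', fwdDiff]
    ring

lemma fwdDiff_iterate_comp_natCast (g : ℝ → ℝ) (k : ℕ) :
    (fwdDiff 1)^[k] (fun m : ℕ => g m) = fun m : ℕ => (fwdDiff (1 : ℝ))^[k] g m := by
  induction k with
  | zero => rfl
  | succ k ih =>
    rw [Function.iterate_succ_apply', ih]
    ext m
    rw [Function.iterate_succ_apply', fwdDiff, fwdDiff]
    push_cast
    rfl

lemma aeval_seqShift_pow_mul_eval (μ : ℝ) {g : ℝ[X]} {n : ℕ} (hn : g.natDegree < n) :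
    aeval seqShift ((X - C μ) ^ n) (fun m => μ ^ m * g.eval (m : ℝ)) = 0 := by
  rw [aeval_seqShift_X_sub_C_pow μ (fun m => g.eval (m : ℝ)),
    fwdDiff_iterate_comp_natCast fun x => g.eval x, fwdDiff_iter_eq_zero_of_degree_lt hn]
  ext m
  simp

/-- On the grid, `Q` satisfies the linear recurrence whose characteristic roots are
`exp (-c i * h)`, each of multiplicity `d + 1`. -/
lemma abs_expPoly_le_on_grid {ι : Type*} (s : Finset ι) (c : ι → ℝ) (hc : ∀ i ∈ s, 0 ≤ c i) {d : ℕ}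
    (p : ι → ℝ[X]) (hp : ∀ i ∈ s, (p i).natDegree ≤ d) {h : ℝ} (hh : 0 ≤ h) (y₀ : ℝ) {δ : ℝ}
    (hδ : 0 ≤ δ) {Q : ℝ → ℝ} (hQ : ∀ y, Q y = ∑ i ∈ s, Real.exp (-c i * y) * (p i).eval y)
    (hb : ∀ m < s.card * (d + 1), |Q (y₀ + m * h)| ≤ δ) (m : ℕ) :
    |Q (y₀ + m * h)| ≤ δ * (2 * ((m : ℝ) + 1)) ^ (s.card * (d + 1)) := by
  classical
  set μ : ι → ℝ := fun i => Real.exp (-c i * h) with hμ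
  set roots : Multiset ℝ := ∑ i ∈ s, Multiset.replicate (d + 1) (μ i) with hroots
  have hcard : roots.card = s.card * (d + 1) := by simp [hroots]
  have hprod : (roots.map fun ν => (X - C ν : ℝ[X])).prod = ∏ i ∈ s, (X - C (μ i)) ^ (d + 1) := by
    rw [hroots, ← Multiset.coe_mapAddMonoidHom, map_sum, Multiset.prod_sum]
    simp [pow_succ']
  have hle : ∀ ν ∈ roots, |ν| ≤ 1 := by
    intro ν hν
    obtain ⟨i, hi, hν⟩ := Multiset.mem_sum.1 hν
    rw [Multiset.eq_of_mem_replicate hν, hμ, abs_of_pos (Real.exp_pos _), Real.exp_le_one_iff]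
    linarith [mul_nonneg (hc i hi) hh]
  have hgrid : (fun m : ℕ => Q (y₀ + m * h)) = ∑ i ∈ s, fun m : ℕ => μ i ^ m *
      (C (Real.exp (-c i * y₀)) * (p i).comp (C y₀ + C h * X)).eval (m : ℝ) := by
    ext m
    rw [hQ, Finset.sum_apply]
    refine Finset.sum_congr rfl fun i _ => ?_
    simp only [eval_mul, eval_C, eval_comp, eval_add, eval_X, hμ]
    rw [← Real.exp_nat_mul, ← mul_assoc, ← Real.exp_add]
    ring_nf
  rw [← hcard] at hb ⊢
  refine abs_le_of_aeval_seqShift_eq_zero roots hle (b := fun m : ℕ => Q (y₀ + m * h)) hδ ?_ hb m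
  rw [hgrid, map_sum, hprod]
  refine Finset.sum_eq_zero fun i hi => ?_
  rw [← Finset.prod_erase_mul _ _ hi, map_mul, Module.End.mul_apply, aeval_seqShift_pow_mul_eval,
    map_zero]
  have hlin : (C y₀ + C h * X : ℝ[X]).natDegree ≤ 1 := by
    rw [add_comm]
    exact natDegree_linear_le
  have hcomp := (natDegree_C_mul_le (Real.exp (-c i * y₀)) _).trans
    (natDegree_comp_le (p := p i) (q := C y₀ + C h * X))
  nlinarith [hp i hi]

end ExpPoly

/-! ### Modular forms on `Γ₀(N)` and Sturm's bound -/

section Gamma0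

open UpperHalfPlane ModularForm Matrix.SpecialLinearGroup CongruenceSubgroup Filter
open scoped MatrixGroups Pointwise Topology

/-- A coset of `Γ₀(N p)` is determined by the first column of a representative, modulo `N` and, up
to scaling, modulo `p`. -/
lemma index_Gamma0_mul_prime_le {N p : ℕ} [NeZero N] (hp : p.Prime) (hpN : N.Coprime p) :
    (Gamma0 (N * p)).index ≤ N ^ 2 * (p + 1) := by
  have := Fact.mk hp
  have : NeZero p := ⟨hp.ne_zero⟩
  let φ : SL(2, ℤ) → Option (ZMod p) × ZMod N × ZMod N := fun g =>
    (if (g 1 0 : ZMod p) = 0 then none else some ((g 0 0 : ZMod p) / (g 1 0 : ZMod p)),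
      (g 0 0 : ZMod N), (g 1 0 : ZMod N))
  have hφ : ∀ g h : SL(2, ℤ), φ g = φ h → g⁻¹ * h ∈ Gamma0 (N * p) := by
    intro g h hgh
    simp only [φ, Prod.mk.injEq] at hgh
    obtain ⟨hslope, htop, hbot⟩ := hgh
    have hentry : (g⁻¹ * h) 1 0 = g 0 0 * h 1 0 - g 1 0 * h 0 0 := by
      rw [Matrix.SpecialLinearGroup.coe_mul, Matrix.SpecialLinearGroup.coe_inv,
        Matrix.adjugate_fin_two, Matrix.mul_apply, Fin.sum_univ_two]
      simp
      ring
    rw [Gamma0_mem, hentry, ZMod.intCast_zmod_eq_zero_iff_dvd, Nat.cast_mul]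
    refine (Nat.isCoprime_iff_coprime.2 hpN).mul_dvd ?_ ?_
    · rw [← ZMod.intCast_zmod_eq_zero_iff_dvd]
      push_cast
      rw [htop, hbot]
      ring
    · rw [← ZMod.intCast_zmod_eq_zero_iff_dvd]
      push_cast
      split_ifs at hslope with hg hh hh
      · rw [hg, hh]
        ring
      · simp only [Option.some.injEq] at hslope
        field_simp at hslope
        rw [hslope]
        ring
  calc (Gamma0 (N * p)).index = Nat.card (SL(2, ℤ) ⧸ Gamma0 (N * p)) := rfl
    _ ≤ Nat.card (Option (ZMod p) × ZMod N × ZMod N) := by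
      refine Nat.card_le_card_of_injective (fun q => φ q.out) fun q r hqr => ?_
      rw [← Quotient.out_eq q, ← Quotient.out_eq r]
      exact QuotientGroup.eq.2 (hφ _ _ hqr)
    _ = N ^ 2 * (p + 1) := by
      rw [Nat.card_prod, Nat.card_prod, Finite.card_option, Nat.card_zmod, Nat.card_zmod]
      ring

lemma card_quotient_map_Gamma0 (N : ℕ) :
    Nat.card (𝒮ℒ ⧸ ((Gamma0 N).map (mapGL ℝ)).subgroupOf 𝒮ℒ) = (Gamma0 N).index := by
  rw [MonoidHom.range_eq_map]
  change Subgroup.relIndex _ _ = _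
  rw [Subgroup.relIndex_map_map_of_injective _ _ mapGL_injective, Subgroup.relIndex_top_right]

/-- `f` is the function underlying a modular form of weight `k` on `Γ₀(N)`. -/
def IsGamma0Form (N k : ℕ) (f : ℍ → ℂ) : Prop :=
  ∃ g : ModularForm ((Gamma0 N).map (mapGL ℝ)) (k : ℤ), ⇑g = f

namespace IsGamma0Form

variable {N k l : ℕ} {f g : ℍ → ℂ}

lemma one : IsGamma0Form N 0 1 :=
  ⟨ModularForm.mcast (by simp) (1 : ModularForm _ 0), by ext; rfl⟩

lemma mul (hf : IsGamma0Form N k f) (hg : IsGamma0Form N l g) :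
    IsGamma0Form N (k + l) (f * g) := by
  obtain ⟨f, rfl⟩ := hf
  obtain ⟨g, rfl⟩ := hg
  exact ⟨ModularForm.mcast (by push_cast; rfl) (f.mul g), by ext; rfl⟩

lemma pow (hf : IsGamma0Form N k f) (n : ℕ) : IsGamma0Form N (n * k) (f ^ n) := by
  induction n with
  | zero => simpa using one
  | succ n ih =>
    rw [pow_succ, add_mul, one_mul]
    exact ih.mul hf

lemma smul (hf : IsGamma0Form N k f) (c : ℂ) : IsGamma0Form N k (c • f) := by
  obtain ⟨f, rfl⟩ := hf
  exact ⟨c • f, by ext; simp⟩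

lemma sum {ι : Type*} (s : Finset ι) (f : ι → ℍ → ℂ) (hf : ∀ i ∈ s, IsGamma0Form N k (f i)) :
    IsGamma0Form N k (∑ i ∈ s, f i) := by
  classical
  induction s using Finset.induction_on with
  | empty => exact ⟨0, by ext; simp⟩
  | insert a s ha ih =>
    rw [Finset.sum_insert ha]
    obtain ⟨x, hx⟩ := hf a (Finset.mem_insert_self a s)
    obtain ⟨y, hy⟩ := ih fun i hi => hf i (Finset.mem_insert_of_mem hi)
    exact ⟨x + y, by ext; simp [← hx, ← hy]⟩

end IsGamma0Form

lemma natCast_le_analyticOrderAt_of_isBigO {α : Type*} {l : Filter α} [l.NeBot] {u : α → ℂ}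
    (hu : Tendsto u l (𝓝 0)) (hu0 : ∀ a, u a ≠ 0) {h : ℂ → ℂ} (hh : AnalyticAt ℂ h 0) {B : ℕ}
    (hO : (fun a => h (u a)) =O[l] fun a => u a ^ B) : (B : ℕ∞) ≤ analyticOrderAt h 0 := by
  by_contra! hlt
  have hfin : analyticOrderAt h 0 ≠ ⊤ := ne_top_of_lt hlt
  obtain ⟨g, hg, hg0, hge⟩ := hh.analyticOrderAt_ne_top.1 hfin
  set m := analyticOrderNatAt h 0
  have hmB : m < B := by
    rw [← Nat.cast_analyticOrderNatAt hfin] at hlt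
    exact_mod_cast hlt
  have hgO : (fun a => g (u a)) =O[l] fun a => u a ^ (B - m) := by
    obtain ⟨c, hc⟩ := hO.bound
    refine Asymptotics.IsBigO.of_bound c ?_
    filter_upwards [hc, hu.eventually hge] with a ha hfactor
    rw [hfactor, sub_zero, smul_eq_mul, norm_mul, norm_pow, norm_pow,
      ← Nat.sub_add_cancel hmB.le, pow_add, ← mul_assoc, mul_comm] at ha
    rw [norm_pow]
    exact le_of_mul_le_mul_right ha (pow_pos (norm_pos_iff.2 (hu0 a)) m)
  have hu_pow : Tendsto (fun a => u a ^ (B - m)) l (𝓝 0) := by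
    simpa [(Nat.sub_pos_of_lt hmB).ne'] using hu.pow (B - m)
  exact hg0 (tendsto_nhds_unique (hg.continuousAt.tendsto.comp hu) (hgO.trans_tendsto hu_pow))

lemma norm_isBigO_of_isBigO {N : ℕ} [NeZero N] {k : ℤ}
    (f : ModularForm ((Gamma0 N).map (mapGL ℝ)) k) {φ : ℍ → ℂ} (hf : ⇑f =O[atImInfty] φ) :
    ⇑(ModularForm.norm 𝒮ℒ f) =O[atImInfty] φ := by
  classical
  let := Fintype.ofFinite (𝒮ℒ ⧸ ((Gamma0 N).map (mapGL ℝ)).subgroupOf 𝒮ℒ)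
  have hconj : ∀ q : 𝒮ℒ ⧸ ((Gamma0 N).map (mapGL ℝ)).subgroupOf 𝒮ℒ,
      SlashInvariantForm.quotientFunc f q =O[atImInfty] fun _ => (1 : ℂ) := by
    rintro ⟨_, r, rfl⟩
    change (⇑f ∣[k] (mapGL ℝ r)⁻¹) =O[atImInfty] _
    rw [← map_inv]
    exact (ModularFormClass.bdd_at_infty_slash f (k := k) (Γ := (Gamma0 N).map (mapGL ℝ))
      r⁻¹).trans (Asymptotics.isBigO_of_le _ (by simp))
  let e : 𝒮ℒ ⧸ ((Gamma0 N).map (mapGL ℝ)).subgroupOf 𝒮ℒ := QuotientGroup.mk 1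
  have hid : SlashInvariantForm.quotientFunc f e =O[atImInfty] φ := by
    change (⇑f ∣[k] ((1 : 𝒮ℒ).val)⁻¹) =O[atImInfty] _
    simpa using hf
  have hothers := Asymptotics.IsBigO.finsetProd (s := Finset.univ.erase e) fun q _ => hconj q
  rw [ModularForm.coe_norm, ← Finset.mul_prod_erase _ _ (Finset.mem_univ e), Finset.prod_fn]
  simpa [Pi.mul_def] using hid.mul hothers

/-- Sturm's bound. The norm of the form to level one vanishes at `∞` at least to the order `B`,
since the other conjugates are bounded there, so Sturm's bound in level one applies to it. -/
lemma IsGamma0Form.eq_zero_of_isBigO_qParam_pow {N k : ℕ} [NeZero N] {f : ℍ → ℂ}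
    (hf : IsGamma0Form N k f) {B : ℕ} (hB : k * (Gamma0 N).index < 12 * B)
    (hO : f =O[atImInfty] fun τ => Function.Periodic.qParam 1 τ ^ B) : f = 0 := by
  obtain ⟨f, rfl⟩ := hf
  rw [← ModularForm.norm_eq_zero_iff (ℋ := 𝒮ℒ) (𝒢 := (Gamma0 N).map (mapGL ℝ)) (k := (k : ℤ))]
  set n := ModularForm.norm 𝒮ℒ f
  have han : AnalyticAt ℂ (cuspFunction 1 n) 0 :=
    ModularFormClass.analyticAt_cuspFunction_zero n one_pos (by simp)
  have hcusp : ∀ τ : ℍ, cuspFunction 1 n (Function.Periodic.qParam 1 τ) = n τ := fun τ =>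
    SlashInvariantFormClass.eq_cuspFunction n τ (by simp) (by simp)
  have hord : (B : ℕ∞) ≤ analyticOrderAt (cuspFunction 1 n) 0 := by
    refine natCast_le_analyticOrderAt_of_isBigO (qParam_tendsto_atImInfty one_pos)
      (fun τ => Complex.exp_ne_zero _) han ?_
    simpa only [hcusp] using norm_isBigO_of_isBigO f hO
  have hcoeff : ∀ i < B, (qExpansion 1 n).coeff i = 0 := fun i hi => by
    rw [qExpansion_coeff, (natCast_le_analyticOrderAt_iff_iteratedDeriv_eq_zero han).1 hord i hi,
      mul_zero]
  refine ModularForm.sturm_bound_levelOne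
    (lt_of_lt_of_le ?_ (PowerSeries.nat_le_order _ B hcoeff))
  rw [card_quotient_map_Gamma0, ← Nat.cast_mul, Int.toNat_natCast]
  exact_mod_cast (by omega : k * (Gamma0 N).index / 12 < B)

/-- The discriminant `Δ` as a function of `q = exp (2 π i τ)` on the unit disc. -/
def qDisc : ℂ → ℂ := cuspFunction 1 ModularForm.discriminant

lemma qDisc_qParam (τ : ℍ) : qDisc (Function.Periodic.qParam 1 τ) = ModularForm.discriminant τ := by
  have := SlashInvariantFormClass.eq_cuspFunction (h := 1) CuspForm.discriminant τ
    (Γ := 𝒮ℒ) (k := 12) (by simp) (by simp)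
  simpa [qDisc] using this

/-- The matrix `diag(d, 1)`, acting on the upper half plane by `τ ↦ d τ`. -/
def dilation (d : ℕ) (hd : d ≠ 0) : GL (Fin 2) ℝ :=
  Matrix.GeneralLinearGroup.mkOfDetNeZero !![(d : ℝ), 0; 0, 1] (by simp [hd])

lemma det_dilation (d : ℕ) (hd : d ≠ 0) : (dilation d hd).det.val = d := by
  simp [dilation, Matrix.GeneralLinearGroup.mkOfDetNeZero]

lemma dilation_smul (d : ℕ) (hd : d ≠ 0) (τ : ℍ) : ((dilation d hd • τ : ℍ) : ℂ) = d * τ := by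
  rw [UpperHalfPlane.coe_smul_of_det_pos]
  · simp [num, denom, dilation, Matrix.GeneralLinearGroup.mkOfDetNeZero]
  · rw [det_dilation]
    positivity

lemma discriminant_slash_dilation (d : ℕ) (hd : d ≠ 0) (τ : ℍ) :
    (ModularForm.discriminant ∣[(12 : ℤ)] dilation d hd) τ
      = (d : ℂ) ^ 11 * qDisc (Function.Periodic.qParam 1 τ ^ d) := by
  have hq : Function.Periodic.qParam 1 τ ^ d
      = Function.Periodic.qParam 1 (dilation d hd • τ : ℍ) := by
    rw [dilation_smul, Function.Periodic.qParam, Function.Periodic.qParam, ← Complex.exp_nat_mul]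
    congr 1
    push_cast
    ring
  have hσ : σ (dilation d hd) = ContinuousAlgEquiv.refl ℝ ℂ := by
    rw [σ, if_pos]
    rw [det_dilation]
    positivity
  rw [hq, qDisc_qParam, ModularForm.slash_apply, det_dilation, hσ]
  simp [denom, dilation, Matrix.GeneralLinearGroup.mkOfDetNeZero]
  ring_nf

lemma map_Gamma0_le_conj_dilation {N d : ℕ} (hd : d ≠ 0) (hdN : d ∣ N) :
    (Gamma0 N).map (mapGL ℝ) ≤ ConjAct.toConjAct (dilation d hd)⁻¹ • 𝒮ℒ := by
  rintro _ ⟨γ, hγ, rfl⟩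
  rw [SetLike.mem_coe, Gamma0_mem, ZMod.intCast_zmod_eq_zero_iff_dvd] at hγ
  obtain ⟨e, he⟩ : (d : ℤ) ∣ γ 1 0 := (Int.natCast_dvd_natCast.2 hdN).trans hγ
  have heR : ((γ 1 0 : ℤ) : ℝ) = d * e := by rw [he]; push_cast; rfl
  have hdet := γ.det_coe
  rw [Matrix.det_fin_two, he] at hdet
  obtain ⟨δ, h00, h01, h10, h11⟩ : ∃ δ : SL(2, ℤ), δ 0 0 = γ 0 0 ∧ δ 0 1 = d * γ 0 1 ∧
      δ 1 0 = e ∧ δ 1 1 = γ 1 1 :=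
    ⟨⟨!![γ 0 0, d * γ 0 1; e, γ 1 1], by rw [Matrix.det_fin_two_of]; linarith⟩, rfl, rfl, rfl, rfl⟩
  rw [Subgroup.mem_pointwise_smul_iff_inv_smul_mem]
  refine ⟨δ, ?_⟩
  rw [← map_inv, inv_inv, ConjAct.toConjAct_smul, eq_mul_inv_iff_mul_eq]
  ext i j
  fin_cases i <;> fin_cases j <;>
    simp [dilation, Matrix.GeneralLinearGroup.mkOfDetNeZero, Matrix.mul_apply, Fin.sum_univ_two,
      heR, h00, h01, h10, h11, mul_comm]

lemma isGamma0Form_qDisc_qParam_pow {N d : ℕ} (hd : d ≠ 0) (hdN : d ∣ N) :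
    IsGamma0Form N 12 fun τ => qDisc (Function.Periodic.qParam 1 τ ^ d) := by
  have hle := map_Gamma0_le_conj_dilation hd hdN
  let t := ModularForm.translate CuspForm.discriminant (dilation d hd) (Γ := 𝒮ℒ) (k := 12)
  have ht : IsGamma0Form N 12 ⇑t := ⟨{
    toFun := t
    holo' := t.holo'
    bdd_at_cusps' := fun hc => t.bdd_at_cusps' (hc.mono hle)
    slash_action_eq' := fun γ hγ => t.slash_action_eq' γ (hle hγ) }, rfl⟩
  convert ht.smul (((d : ℂ) ^ 11)⁻¹) using 1
  ext τ
  have hτ : t τ = (d : ℂ) ^ 11 * qDisc (Function.Periodic.qParam 1 τ ^ d) :=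
    discriminant_slash_dilation d hd τ
  rw [Pi.smul_apply, hτ, smul_eq_mul, inv_mul_cancel_left₀]
  exact pow_ne_zero _ (by exact_mod_cast hd)

end Gamma0

/-! ### The discriminant in the variable `q` -/

section Discriminant

open UpperHalfPlane ModularForm
open scoped MatrixGroups

/-- Euler's product `∏ (1 - z ^ n)` over `n ≥ 1`. -/
def eulerProd (z : ℂ) : ℂ := ∏' n : ℕ, (1 - z ^ (n + 1))

lemma summable_norm_pow_succ {z : ℂ} (hz : ‖z‖ < 1) : Summable fun n : ℕ => ‖z ^ (n + 1)‖ := by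
  simpa using (summable_nat_add_iff 1).mpr (summable_geometric_of_lt_one (norm_nonneg _) hz)

lemma qDisc_eq_mul_eulerProd_pow {z : ℂ} (hz : ‖z‖ < 1) : qDisc z = z * eulerProd z ^ 24 := by
  rw [qDisc, discriminant_cuspFunction_eqOn (x := z) (by simpa using hz), eulerProd]
  exact congrArg (z * ·) ((multipliable_one_sub_pow hz).tprod_pow 24)

lemma one_sub_pow_ne_zero {z : ℂ} (hz : ‖z‖ < 1) {n : ℕ} (hn : n ≠ 0) : 1 - z ^ n ≠ 0 := by
  rw [sub_ne_zero]
  intro h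
  have hlt := norm_pow_lt_one hz hn
  rw [← h, norm_one] at hlt
  exact lt_irrefl _ hlt

lemma eulerProd_ne_zero {z : ℂ} (hz : ‖z‖ < 1) : eulerProd z ≠ 0 := by
  have := tprod_one_add_ne_zero_of_summable (f := fun n : ℕ => -z ^ (n + 1)) (fun i => ?_)
    (by simpa using summable_norm_pow_succ hz)
  · simpa [eulerProd, sub_eq_add_neg] using this
  · rw [← sub_eq_add_neg]
    exact one_sub_pow_ne_zero hz i.succ_ne_zero

lemma qDisc_ne_zero {z : ℂ} (hz0 : z ≠ 0) (hz : ‖z‖ < 1) : qDisc z ≠ 0 := by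
  rw [qDisc_eq_mul_eulerProd_pow hz]
  exact mul_ne_zero hz0 (pow_ne_zero _ (eulerProd_ne_zero hz))

lemma finite_setOf_sum_succ_eq (n : ℕ) : {s : Finset ℕ | ∑ i ∈ s, (i + 1) = n}.Finite := by
  refine (Finset.finite_toSet (Finset.range n).powerset).subset fun s hs => ?_
  rw [Finset.coe_powerset, Set.mem_preimage, Set.mem_powerset_iff]
  intro i hi
  have hle := Finset.single_le_sum (f := fun i => i + 1) (fun _ _ => Nat.zero_le _) hi
  rw [Finset.coe_range, Set.mem_Iio]
  exact Nat.lt_of_succ_le (hle.trans_eq hs)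

lemma hasIntDiscSeries_eulerProd : HasIntDiscSeries eulerProd := by
  classical
  let deg : Finset ℕ → ℕ := fun s => ∑ i ∈ s, (i + 1)
  let _ : ∀ n, Fintype {s : Finset ℕ // deg s = n} := fun n => (finite_setOf_sum_succ_eq n).fintype
  refine ⟨fun n => ∑ s : {s : Finset ℕ // deg s = n}, (-1) ^ s.1.card, fun z hz => ?_⟩
  have hsum : Summable fun s : Finset ℕ => ∏ i ∈ s, (-z ^ (i + 1)) :=
    summable_finsetProd_of_summable_norm (by simpa using summable_norm_pow_succ hz)
  have hexpand : HasSum (fun s : Finset ℕ => ∏ i ∈ s, (-z ^ (i + 1))) (eulerProd z) := by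
    convert hsum.hasSum using 1
    rw [← tprod_one_add hsum, eulerProd]
    simp only [sub_eq_add_neg]
  rw [← (Equiv.sigmaFiberEquiv deg).hasSum_iff] at hexpand
  refine hexpand.sigma (g := _) fun n => ?_
  convert hasSum_fintype fun s : {s : Finset ℕ // deg s = n} => ∏ i ∈ s.1, (-z ^ (i + 1)) using 1
  · rfl
  push_cast
  rw [Finset.sum_mul]
  refine Finset.sum_congr rfl fun s _ => ?_
  rw [Finset.prod_congr rfl (fun i _ => neg_eq_neg_one_mul (z ^ (i + 1))), Finset.prod_mul_distrib,
    Finset.prod_const, Finset.prod_pow_eq_pow_sum, show ∑ i ∈ s.1, (i + 1) = n from s.2]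

lemma hasIntDiscSeries_qDisc : HasIntDiscSeries qDisc :=
  (HasIntDiscSeries.id.mul (hasIntDiscSeries_eulerProd.pow 24)).congr fun _ hz =>
    (qDisc_eq_mul_eulerProd_pow hz).symm

/-- From the bound `|Δ(τ)| ≤ C Im(τ) ^ (-6)` for a cusp form of weight `12`. -/
lemma exists_norm_qDisc_le :
    ∃ C : ℝ, 1 ≤ C ∧ ∀ z : ℂ, ‖z‖ < 1 → ‖qDisc z‖ ≤ C * (1 / (1 - ‖z‖)) ^ 6 := by
  obtain ⟨C, hC⟩ := CuspFormClass.exists_bound (Γ := 𝒮ℒ) (k := 12) CuspForm.discriminant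
  refine ⟨max 1 (C * (2 * Real.pi) ^ 6), le_max_left _ _, fun z hz => ?_⟩
  have hpos : 0 < 1 - ‖z‖ := by linarith
  rcases eq_or_ne z 0 with rfl | hz0
  · simp [qDisc_eq_mul_eulerProd_pow hz]
  let τ : ℍ := ⟨_, Function.Periodic.im_invQParam_pos_of_norm_lt_one one_pos hz hz0⟩
  have hτ : Function.Periodic.qParam 1 τ = z := Function.Periodic.qParam_right_inv one_ne_zero hz0
  have hΔ : ‖qDisc z‖ ≤ C / τ.im ^ 6 := by
    have hCτ := hC τ
    rwa [CuspForm.coe_discriminant, ← qDisc_qParam, hτ,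
      show (((12 : ℤ) : ℝ) / 2) = ((6 : ℕ) : ℝ) by norm_num, Real.rpow_natCast] at hCτ
  have him : 1 - ‖z‖ ≤ 2 * Real.pi * τ.im := by
    have hnorm : ‖z‖ = Real.exp (-2 * Real.pi * τ.im) := by
      rw [← hτ, Function.Periodic.norm_qParam]
      simp
    linarith [Real.add_one_le_exp (-2 * Real.pi * τ.im)]
  calc ‖qDisc z‖ ≤ C / τ.im ^ 6 := hΔ
    _ = C * (2 * Real.pi) ^ 6 * (1 / (2 * Real.pi * τ.im)) ^ 6 := by
      have := τ.im_pos.ne'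
      field_simp
    _ ≤ max 1 (C * (2 * Real.pi) ^ 6) * (1 / (1 - ‖z‖)) ^ 6 := by
      gcongr
      exact le_max_right _ _

lemma qDisc_exp_eq_discriminant {t : ℝ} (ht : 0 < t) :
    qDisc (Real.exp (-2 * Real.pi * t) : ℝ)
      = ModularForm.discriminant ⟨Complex.I * t, by simpa using ht⟩ := by
  rw [← qDisc_qParam]
  congr 1
  simp only [Function.Periodic.qParam]
  push_cast
  congr 1
  linear_combination (2 * Real.pi * t : ℂ) * -Complex.I_mul_I

/-- `Δ(-1/τ) = τ¹² Δ(τ)` at `τ = i y`. -/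
lemma qDisc_exp_inversion {y : ℝ} (hy : 0 < y) :
    qDisc (Real.exp (-2 * Real.pi * y) : ℝ)
      = ((y : ℂ) ^ 12)⁻¹ * qDisc (Real.exp (-2 * Real.pi / y) : ℝ) := by
  have hinv := congrFun discriminant_S_invariant ⟨Complex.I * y, by simpa using hy⟩
  have hS : (ModularGroup.S • (⟨Complex.I * y, by simpa using hy⟩ : ℍ) : ℍ)
      = ⟨Complex.I * ((1 / y : ℝ) : ℂ), by simpa using hy⟩ := by
    rw [modular_S_smul]
    ext1
    simp [mul_comm]
  have hfactor : (Complex.I * y) ^ (-(12 : ℤ)) = ((y : ℂ) ^ 12)⁻¹ := by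
    have hI : Complex.I ^ (12 : ℤ) = 1 := by
      rw [show (12 : ℤ) = ((4 * 3 : ℕ) : ℤ) by norm_num, zpow_natCast, pow_mul, Complex.I_pow_four,
        one_pow]
    rw [zpow_neg, mul_zpow, hI, one_mul]
    norm_cast
  rw [SL_slash_apply, hS, ModularGroup.denom_S] at hinv
  rw [qDisc_exp_eq_discriminant hy, show -2 * Real.pi / y = -2 * Real.pi * (1 / y) by ring,
    qDisc_exp_eq_discriminant (by positivity : 0 < 1 / y), ← hinv, mul_comm]
  congr 1

lemma one_sub_two_mul_le_prod_one_sub_pow {x : ℝ} (hx0 : 0 < x) (hx : x ≤ 1 / 2) (n : ℕ) :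
    1 - 2 * x + 2 * x ^ (n + 1) ≤ ∏ i ∈ Finset.range n, (1 - x ^ (i + 1)) := by
  induction n with
  | zero => simp
  | succ n ih =>
    have hle : ∏ i ∈ Finset.range n, (1 - x ^ (i + 1)) ≤ 1 := Finset.prod_le_one
      (fun i _ => sub_nonneg.2 (pow_le_one₀ hx0.le (by linarith)))
      (fun i _ => by linarith [pow_pos hx0 (i + 1)])
    have hpos := pow_pos hx0 (n + 1)
    rw [Finset.prod_range_succ, pow_succ x (n + 1)]
    nlinarith

lemma exists_eulerProd_ofReal_eq {x : ℝ} (hx0 : 0 < x) (hx : x ≤ 1 / 2) :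
    ∃ P : ℝ, eulerProd x = P ∧ 0 ≤ P ∧ P ≤ 1 ∧ 1 - 2 * x ≤ P := by
  have hx1 : ‖(x : ℂ)‖ < 1 := by
    rw [Complex.norm_real, Real.norm_of_nonneg hx0.le]
    linarith
  have hfactor : ∀ n : ℕ, 0 ≤ 1 - x ^ (n + 1) ∧ 1 - x ^ (n + 1) ≤ 1 := fun n =>
    ⟨sub_nonneg.2 (pow_le_one₀ hx0.le (by linarith)), by linarith [pow_pos hx0 (n + 1)]⟩
  have hmul : Multipliable fun n : ℕ => (1 - x ^ (n + 1) : ℝ) :=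
    multipliable_one_add_of_summable (f := fun n ↦ -x ^ (n + 1))
      (by simpa using summable_norm_pow_succ hx1)
  have hlim := hmul.hasProd.tendsto_prod_nat
  refine ⟨∏' n : ℕ, (1 - x ^ (n + 1)), ?_, ?_, ?_, ?_⟩
  · have := (hmul.hasProd.map Complex.ofRealHom Complex.continuous_ofReal).tprod_eq
    simpa [eulerProd, Function.comp_def] using this
  · exact ge_of_tendsto' hlim fun n => Finset.prod_nonneg fun i _ => (hfactor i).1
  · exact le_of_tendsto' hlim fun n =>
      Finset.prod_le_one (fun i _ => (hfactor i).1) (fun i _ => (hfactor i).2)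
  · refine ge_of_tendsto' hlim fun n => ?_
    linarith [one_sub_two_mul_le_prod_one_sub_pow hx0 hx n, pow_pos hx0 (n + 1)]

lemma exists_qDisc_ofReal_eq {x : ℝ} (hx0 : 0 < x) (hx : x ≤ 1 / 2) :
    ∃ u : ℝ, qDisc x = ((x * u : ℝ) : ℂ) ∧ 0 ≤ u ∧ u ≤ 1 ∧ 1 - u ≤ 48 * x := by
  have hx1 : ‖(x : ℂ)‖ < 1 := by
    rw [Complex.norm_real, Real.norm_of_nonneg hx0.le]
    linarith
  obtain ⟨P, hP, hP0, hP1, hPx⟩ := exists_eulerProd_ofReal_eq hx0 hx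
  refine ⟨P ^ 24, ?_, by positivity, pow_le_one₀ hP0 hP1, ?_⟩
  · rw [qDisc_eq_mul_eulerProd_pow hx1, hP]
    push_cast
    ring
  · have hbernoulli := one_add_mul_le_pow (a := P - 1) (by linarith) 24
    push_cast at hbernoulli
    rw [add_sub_cancel] at hbernoulli
    linarith

end Discriminant

/-! ### The auxiliary function -/

section AuxiliaryFunction

open UpperHalfPlane Asymptotics CongruenceSubgroup

/-- The auxiliary function: the combination of the functions `z ^ l Δ(z) ^ (2 i) Δ(z²) ^ (2 j)` with
coefficients `a (l, i, j)`, where `Δ` is the discriminant as a function of `q`. -/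
def auxFun (W : ℕ) (a : Fin W × Fin W × Fin W → ℤ) (z : ℂ) : ℂ :=
  ∑ t, (a t : ℂ) * (z ^ (t.1 : ℕ) * (qDisc z ^ (2 * t.2.1 : ℕ) * qDisc (z ^ 2) ^ (2 * t.2.2 : ℕ)))

/-- The modular forms of weight `96 W` on `Γ₀(4 k)`, as functions of `q`, which interpolate `auxFun`
at `x ^ k`. The powers of `Δ(q)³ Δ(q⁴)` and of `Δ(q²)²`, whose quotient is `discQuot`, make the
weight independent of `i` and `j`. -/
def interpForm (W i j k : ℕ) (z : ℂ) : ℂ :=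
  (qDisc z ^ 3 * qDisc (z ^ 4)) ^ (2 * W - i - j) * qDisc (z ^ 2) ^ (2 * (i + j)) *
    (qDisc (z ^ k) ^ (2 * i) * qDisc (z ^ (2 * k)) ^ (2 * j))

/-- The modular function `Δ(q)³ Δ(q⁴) / Δ(q²)²` of weight `24`, at `q = x`. -/
def discQuot (x : ℂ) : ℂ := qDisc x ^ 3 * qDisc (x ^ 4) / qDisc (x ^ 2) ^ 2

lemma hasIntDiscSeries_qDisc_pow {d : ℕ} (hd : d ≠ 0) : HasIntDiscSeries fun z => qDisc (z ^ d) :=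
  hasIntDiscSeries_qDisc.comp_pow hd

lemma hasIntDiscSeries_auxFun (W : ℕ) (a : Fin W × Fin W × Fin W → ℤ) :
    HasIntDiscSeries (auxFun W a) :=
  .sum _ _ fun _ _ => (HasIntDiscSeries.const _).mul ((HasIntDiscSeries.id.pow _).mul
    ((hasIntDiscSeries_qDisc.pow _).mul ((hasIntDiscSeries_qDisc_pow two_ne_zero).pow _)))

lemma hasIntDiscSeries_interpForm (W i j : ℕ) {k : ℕ} (hk : k ≠ 0) :
    HasIntDiscSeries (interpForm W i j k) :=
  ((((hasIntDiscSeries_qDisc.pow 3).mul (hasIntDiscSeries_qDisc_pow four_ne_zero)).pow _).mul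
    ((hasIntDiscSeries_qDisc_pow two_ne_zero).pow _)).mul
    (((hasIntDiscSeries_qDisc_pow hk).pow _).mul
      ((hasIntDiscSeries_qDisc_pow (mul_ne_zero two_ne_zero hk)).pow _))

lemma one_div_one_sub_norm_pow_le {z : ℂ} (hz : ‖z‖ < 1) {d : ℕ} (hd : d ≠ 0) :
    1 / (1 - ‖z ^ d‖) ≤ 1 / (1 - ‖z‖) := by
  rw [norm_pow]
  exact one_div_le_one_div_of_le (sub_pos.2 hz)
    (sub_le_sub_left (pow_le_of_le_one (norm_nonneg z) hz.le hd) 1)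

lemma exists_norm_qDisc_pow_le : ∃ C : ℝ, 1 ≤ C ∧ ∀ z : ℂ, ‖z‖ < 1 → ∀ d : ℕ, d ≠ 0 →
    ‖qDisc (z ^ d)‖ ≤ C * (1 / (1 - ‖z‖)) ^ 6 := by
  obtain ⟨C, hC, hgrowth⟩ := exists_norm_qDisc_le
  refine ⟨C, hC, fun z hz d hd => (hgrowth _ (norm_pow_lt_one hz hd)).trans ?_⟩
  have hpos : 0 < 1 - ‖z ^ d‖ := sub_pos.2 (norm_pow_lt_one hz hd)
  gcongr ?_ * ?_ ^ 6
  exact one_div_one_sub_norm_pow_le hz hd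

lemma exists_norm_interpForm_le : ∃ C : ℝ, 1 ≤ C ∧ ∀ W i j k : ℕ, i < W → j < W → k ≠ 0 →
    ∀ z : ℂ, ‖z‖ < 1 → ‖interpForm W i j k z‖ ≤ C ^ (8 * W) * (1 / (1 - ‖z‖)) ^ (48 * W) := by
  obtain ⟨C, hC, hgrowth⟩ := exists_norm_qDisc_pow_le
  refine ⟨C, hC, fun W i j k hi hj hk z hz => ?_⟩
  set X := C * (1 / (1 - ‖z‖)) ^ 6 with hX
  have h1 : ‖qDisc z‖ ≤ X := by simpa only [pow_one] using hgrowth z hz 1 one_ne_zero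
  calc ‖interpForm W i j k z‖
      ≤ (X ^ 3 * X) ^ (2 * W - i - j) * X ^ (2 * (i + j)) * (X ^ (2 * i) * X ^ (2 * j)) := by
        have : 0 ≤ X := (norm_nonneg _).trans h1
        simp only [interpForm, norm_mul, norm_pow (qDisc _), norm_pow (_ * _)]
        gcongr
        exacts [hgrowth z hz 4 four_ne_zero, hgrowth z hz 2 two_ne_zero, hgrowth z hz k hk,
          hgrowth z hz (2 * k) (mul_ne_zero two_ne_zero hk)]
    _ = X ^ (8 * W) := by
        rw [← pow_succ, ← pow_mul, ← pow_add, ← pow_add, ← pow_add]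
        congr 1
        omega
    _ = C ^ (8 * W) * (1 / (1 - ‖z‖)) ^ (48 * W) := by
        rw [hX, mul_pow, ← pow_mul]
        congr 2
        ring

lemma isGamma0Form_interpForm {W i j k : ℕ} (hi : i < W) (hj : j < W) (hk : k ≠ 0) :
    IsGamma0Form (4 * k) (96 * W)
      fun τ => interpForm W i j k (Function.Periodic.qParam 1 τ) := by
  have h1 : IsGamma0Form (4 * k) 12 fun τ => qDisc (Function.Periodic.qParam 1 τ) := by
    simpa only [pow_one] using isGamma0Form_qDisc_qParam_pow one_ne_zero (one_dvd (4 * k))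
  have h2 := isGamma0Form_qDisc_qParam_pow (N := 4 * k) two_ne_zero ⟨2 * k, by ring⟩
  have h4 := isGamma0Form_qDisc_qParam_pow (N := 4 * k) four_ne_zero ⟨k, rfl⟩
  have hk1 := isGamma0Form_qDisc_qParam_pow (N := 4 * k) hk ⟨4, by ring⟩
  have hk2 := isGamma0Form_qDisc_qParam_pow (N := 4 * k) (mul_ne_zero two_ne_zero hk) ⟨2, by ring⟩
  convert ((((h1.pow 3).mul h4).pow (2 * W - i - j)).mul (h2.pow (2 * (i + j)))).mul
    ((hk1.pow (2 * i)).mul (hk2.pow (2 * j))) using 1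
  · omega
  · rfl

lemma HasDiscSeries.sum_const_mul {ι : Type*} [Fintype ι] {a : ι → ℕ → ℂ} {f : ι → ℂ → ℂ}
    (h : ∀ i, HasDiscSeries (a i) (f i)) (b : ι → ℂ) :
    HasDiscSeries (fun n => ∑ i, b i * a i n) fun z => ∑ i, b i * f i z := fun z hz => by
  simpa only [Finset.sum_mul, mul_assoc] using
    hasSum_sum (s := Finset.univ) fun i _ => (h i z hz).mul_left (b i)

lemma HasDiscSeries.isBigO_qParam_pow {a : ℕ → ℂ} {f : ℂ → ℂ} (h : HasDiscSeries a f) {B : ℕ}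
    (ha : ∀ n < B, a n = 0) :
    (fun τ : ℍ => f (Function.Periodic.qParam 1 τ)) =O[atImInfty]
      fun τ => Function.Periodic.qParam 1 τ ^ B := by
  obtain ⟨g, hg, hfg⟩ := h.exists_eq_pow_mul ha
  have hgcont : ContinuousAt g 0 :=
    (hg.differentiableOn.differentiableAt (Metric.ball_mem_nhds _ one_pos)).continuousAt
  have hgbdd := (hgcont.tendsto.comp (qParam_tendsto_atImInfty one_pos)).isBigO_one ℂ
  refine ((isBigO_refl (fun τ : ℍ => Function.Periodic.qParam 1 τ ^ B) atImInfty).mul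
    hgbdd).congr (fun τ => ?_) fun τ => mul_one _
  exact (hfg _ (by simpa using norm_qParam_lt_one 1 τ)).symm

/-- By Sturm's bound, since `Γ₀(4 p)` has index at most `16 (p + 1)`. -/
lemma sum_interpForm_eq_zero {W p B : ℕ} (hp : p.Prime) (hp2 : p ≠ 2)
    (hB : 96 * W * (16 * (p + 1)) < 12 * B) {ι : Type*} [Fintype ι] (b : ι → ℂ) {i j : ι → ℕ}
    (hi : ∀ t, i t < W) (hj : ∀ t, j t < W) {e : ι → ℕ → ℂ}
    (he : ∀ t, HasDiscSeries (e t) (interpForm W (i t) (j t) p))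
    (h0 : ∀ m < B, ∑ t, b t * e t m = 0) {z : ℂ} (hz0 : z ≠ 0) (hz : ‖z‖ < 1) :
    ∑ t, b t * interpForm W (i t) (j t) p z = 0 := by
  have hform : IsGamma0Form (4 * p) (96 * W)
      fun τ => ∑ t, b t * interpForm W (i t) (j t) p (Function.Periodic.qParam 1 τ) := by
    convert IsGamma0Form.sum Finset.univ _ fun t _ =>
      (isGamma0Form_interpForm (hi t) (hj t) hp.ne_zero).smul (b t) using 1
    ext τ
    simp
  have : NeZero (4 * p) := ⟨mul_ne_zero four_ne_zero hp.ne_zero⟩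
  have hcop : Nat.Coprime 4 p :=
    Nat.Coprime.pow_left 2 ((Nat.coprime_primes Nat.prime_two hp).2 hp2.symm)
  have hindex := Nat.mul_le_mul_left (96 * W) (index_Gamma0_mul_prime_le hp hcop)
  have hzero := hform.eq_zero_of_isBigO_qParam_pow (hindex.trans_lt hB)
    ((HasDiscSeries.sum_const_mul he b).isBigO_qParam_pow h0)
  have hτ := congrFun hzero
    ⟨_, Function.Periodic.im_invQParam_pos_of_norm_lt_one one_pos hz hz0⟩
  simpa only [coe_mk, Pi.zero_apply, Function.Periodic.qParam_right_inv one_ne_zero hz0] using hτ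

section

variable {x : ℂ} (hx0 : x ≠ 0) (hx : ‖x‖ < 1)

include hx0 hx

lemma qDisc_pow_ne_zero {d : ℕ} (hd : d ≠ 0) : qDisc (x ^ d) ≠ 0 :=
  qDisc_ne_zero (pow_ne_zero _ hx0) (norm_pow_lt_one hx hd)

lemma discQuot_ne_zero : discQuot x ≠ 0 :=
  div_ne_zero (mul_ne_zero (pow_ne_zero _ (qDisc_ne_zero hx0 hx))
    (qDisc_pow_ne_zero hx0 hx four_ne_zero)) (pow_ne_zero _ (qDisc_pow_ne_zero hx0 hx two_ne_zero))

/-- Up to a factor independent of `i`, `j`, `l`, the term of index `(l, i, j)` of `auxFun` at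
`x ^ k` is a monomial in `x` and `discQuot x` times a modular form. -/
lemma mul_interpForm_eq {W i j : ℕ} (hi : i < W) (hj : j < W) (k l : ℕ) :
    x ^ (k * l) * discQuot x ^ (i + j) * interpForm W i j k x =
      discQuot x ^ (2 * W) * qDisc (x ^ 2) ^ (4 * W) *
        ((x ^ k) ^ l * (qDisc (x ^ k) ^ (2 * i) * qDisc ((x ^ k) ^ 2) ^ (2 * j))) := by
  have hquot : qDisc x ^ 3 * qDisc (x ^ 4) = discQuot x * qDisc (x ^ 2) ^ 2 :=
    (div_mul_cancel₀ _ (pow_ne_zero _ (qDisc_pow_ne_zero hx0 hx two_ne_zero))).symm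
  obtain ⟨n, hn⟩ : ∃ n, 2 * W = i + j + n := ⟨2 * W - (i + j), by omega⟩
  rw [interpForm, hquot, show 2 * W - i - j = n by omega, hn,
    show 4 * W = 2 * n + 2 * (i + j) by omega, ← pow_mul x k 2, mul_comm 2 k]
  ring

/-- The equations on the coefficients `a` which Siegel's lemma has to solve. Multiplying
`discQuot x` by an integer `D` will make it integral. -/
lemma auxFun_pow_eq_zero {W p B : ℕ} (hp : p.Prime) (hp2 : p ≠ 2)
    (hB : 96 * W * (16 * (p + 1)) < 12 * B) {D : ℤ} (hD : D ≠ 0) {e : ℕ → ℕ → ℕ → ℤ}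
    (he : ∀ i j, HasDiscSeries (fun n => (e i j n : ℂ)) (interpForm W i j p))
    (a : Fin W × Fin W × Fin W → ℤ)
    (ha : ∀ m < B, ∑ t, (a t : ℂ) * ((D ^ (2 * W - t.2.1 - t.2.2 : ℕ) * e t.2.1 t.2.2 m : ℤ) *
      x ^ (p * t.1) * (D * discQuot x) ^ (t.2.1 + t.2.2 : ℕ)) = 0) :
    auxFun W a (x ^ p) = 0 := by
  have hDC : (D : ℂ) ≠ 0 := Int.cast_ne_zero.2 hD
  have hsum := sum_interpForm_eq_zero hp hp2 hB
    (fun t : Fin W × Fin W × Fin W => (a t : ℂ) * ((D : ℂ) ^ (2 * W) *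
      (x ^ (p * t.1) * discQuot x ^ (t.2.1 + t.2.2 : ℕ))))
    (fun t => t.2.1.2) (fun t => t.2.2.2) (fun t => he t.2.1 t.2.2) (fun m hm => by
      rw [← ha m hm]
      refine Finset.sum_congr rfl fun t _ => ?_
      have hW : (D : ℂ) ^ (2 * W) =
          (D : ℂ) ^ (2 * W - t.2.1 - t.2.2 : ℕ) * (D : ℂ) ^ (t.2.1 + t.2.2 : ℕ) := by
        rw [← pow_add]
        congr 1
        omega
      rw [hW, mul_pow]
      push_cast
      ring) hx0 hx
  have hfactor : ∑ t : Fin W × Fin W × Fin W, (a t : ℂ) * ((D : ℂ) ^ (2 * W) *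
      (x ^ (p * t.1) * discQuot x ^ (t.2.1 + t.2.2 : ℕ))) * interpForm W t.2.1 t.2.2 p x =
      (D : ℂ) ^ (2 * W) * (discQuot x ^ (2 * W) * qDisc (x ^ 2) ^ (4 * W)) *
        auxFun W a (x ^ p) := by
    rw [auxFun, Finset.mul_sum]
    refine Finset.sum_congr rfl fun t _ => ?_
    linear_combination (a t : ℂ) * (D : ℂ) ^ (2 * W) *
      mul_interpForm_eq hx0 hx t.2.1.2 t.2.2.2 p t.1
  rw [hfactor] at hsum
  exact (mul_eq_zero.1 hsum).resolve_left (mul_ne_zero (pow_ne_zero _ hDC)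
    (mul_ne_zero (pow_ne_zero _ (discQuot_ne_zero hx0 hx))
      (pow_ne_zero _ (qDisc_pow_ne_zero hx0 hx two_ne_zero))))

end

/-- The number `512 s ^ 7` exceeds the Sturm bound for the weight `96 s ^ 4` and the levels `4 p`
with `p ≤ s ^ 3`. -/
lemma exists_abs_coeff_interpForm_le : ∃ C : ℝ, 0 ≤ C ∧ ∀ s : ℕ, 1 ≤ s → ∀ i j k m : ℕ, i < s ^ 4 →
    j < s ^ 4 → k ≠ 0 → m < 512 * s ^ 7 → ∀ e : ℕ → ℤ,
    HasDiscSeries (fun n => (e n : ℂ)) (interpForm (s ^ 4) i j k) →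
    |(e m : ℝ)| ≤ Real.exp (C * s ^ 5) := by
  obtain ⟨C, hC, hgrowth⟩ := exists_norm_interpForm_le
  have hlogC : 0 ≤ Real.log C := Real.log_nonneg hC
  refine ⟨4 + 8 * Real.log C + 48 * 600, by positivity, fun s hs i j k m hi hj hk hm e he => ?_⟩
  have hs1 : (1 : ℝ) ≤ s := Nat.one_le_cast.2 hs
  have hcoeff := he.norm_coeff_le_of_growth (by positivity)
    (fun z hz => hgrowth (s ^ 4) i j k hi hj hk z hz) m
  rw [Complex.norm_intCast] at hcoeff
  have hm2 : (m : ℝ) + 2 ≤ 514 * s ^ 7 := by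
    have : (m : ℝ) ≤ 512 * s ^ 7 := by exact_mod_cast hm.le
    linarith [one_le_pow₀ hs1 (n := 7)]
  have hlogm : Real.log ((m : ℝ) + 2) ≤ 600 * s := by
    have h514 : Real.log 514 ≤ 513 := by
      linarith [Real.log_le_sub_one_of_pos (show (0 : ℝ) < 514 by norm_num)]
    have hlogs : Real.log s ≤ s - 1 := Real.log_le_sub_one_of_pos (by positivity)
    have := Real.log_le_log (by positivity) hm2
    rw [Real.log_mul (by norm_num) (by positivity), Real.log_pow] at this
    push_cast at this
    linarith
  have hlog4 : Real.log 4 ≤ 4 := Real.log_le_self (by norm_num)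
  refine hcoeff.trans ?_
  rw [← Real.log_le_iff_le_exp (by positivity), Real.log_mul (by positivity) (by positivity),
    Real.log_mul (by positivity) (by positivity), Real.log_pow, Real.log_pow]
  push_cast
  calc Real.log 4 + 8 * s ^ 4 * Real.log C + 48 * s ^ 4 * Real.log (m + 2)
      ≤ 4 * s ^ 5 + 8 * s ^ 5 * Real.log C + 48 * s ^ 4 * (600 * s) := by
        gcongr
        · linarith [one_le_pow₀ hs1 (n := 5)]
        · norm_num
    _ = (4 + 8 * Real.log C + 48 * 600) * s ^ 5 := by ring

end AuxiliaryFunction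

section Construction

open Filter

lemma siegel_exponent_le {s C L d : ℝ} (hs : 1 ≤ s) (hC : 0 ≤ C) (hL : 0 ≤ L) (hd : 0 ≤ d) :
    (C * s ^ 5 + (s ^ 3 * s ^ 4 + 2 * s ^ 4) * L + Real.log (s ^ 12)) *
      (2 * (d * (s ^ 3 * (512 * s ^ 7))) / s ^ 12) ≤ (C + 3 * L + 12) * (1024 * d) * s ^ 5 := by
  have hs0 : 0 < s := one_pos.trans_le hs
  have hlog : Real.log (s ^ 12) ≤ 12 * s ^ 7 := by
    rw [Real.log_pow]
    push_cast
    linarith [Real.log_le_self hs0.le, le_self_pow₀ hs (show 7 ≠ 0 by norm_num)]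
  have h57 : s ^ 5 ≤ s ^ 7 := pow_le_pow_right₀ hs (by norm_num)
  have h47 : s ^ 4 ≤ s ^ 7 := pow_le_pow_right₀ hs (by norm_num)
  rw [show 2 * (d * (s ^ 3 * (512 * s ^ 7))) / s ^ 12 = 1024 * d / s ^ 2 by field_simp; ring]
  calc _ ≤ (C * s ^ 7 + (s ^ 3 * s ^ 4 + 2 * s ^ 7) * L + 12 * s ^ 7) * (1024 * d / s ^ 2) := by
        gcongr
    _ = _ := by
        field_simp
        ring

lemma exists_abs_pow_mul_coeff_interpForm_le {D : ℤ} (hD : D ≠ 0) : ∃ C : ℝ, 0 ≤ C ∧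
    ∀ s : ℕ, 1 ≤ s → ∀ i j k m n : ℕ, i < s ^ 4 → j < s ^ 4 → k ≠ 0 → m < 512 * s ^ 7 →
    n ≤ 2 * s ^ 4 → ∀ e : ℕ → ℤ,
    HasDiscSeries (fun n => (e n : ℂ)) (interpForm (s ^ 4) i j k) →
    |((D ^ n * e m : ℤ) : ℝ)| ≤ Real.exp (C * s ^ 5) := by
  obtain ⟨C, hC, hcoeff⟩ := exists_abs_coeff_interpForm_le
  have hD1 : (1 : ℝ) ≤ |(D : ℝ)| := by exact_mod_cast Int.one_le_abs hD
  have hlogD : 0 ≤ Real.log |(D : ℝ)| := Real.log_nonneg hD1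
  refine ⟨2 * Real.log |(D : ℝ)| + C, by positivity,
    fun s hs i j k m n hi hj hk hm hn e he => ?_⟩
  have hs45 : (s : ℝ) ^ 4 ≤ s ^ 5 := pow_le_pow_right₀ (Nat.one_le_cast.2 hs) (by norm_num)
  have hnR : (n : ℝ) ≤ 2 * s ^ 4 := by exact_mod_cast hn
  have hpow : |(D : ℝ)| ^ n ≤ Real.exp (2 * Real.log |(D : ℝ)| * s ^ 5) := by
    rw [← Real.log_le_iff_le_exp (by positivity), Real.log_pow]
    nlinarith
  push_cast
  rw [abs_mul, abs_pow, add_mul, Real.exp_add]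
  gcongr
  exact hcoeff s hs i j k m hi hj hk hm e he

lemma sturm_bound_lt {s p : ℕ} (hs : 1 ≤ s) (hp : p ≤ s ^ 3) :
    96 * s ^ 4 * (16 * (p + 1)) < 12 * (512 * s ^ 7) := by
  have hp1 : p + 1 ≤ 2 * s ^ 3 := by linarith [Nat.one_le_pow 3 s hs]
  calc 96 * s ^ 4 * (16 * (p + 1)) ≤ 96 * s ^ 4 * (16 * (2 * s ^ 3)) := by gcongr
    _ = 3072 * s ^ 7 := by ring
    _ < 12 * (512 * s ^ 7) := by linarith [Nat.one_le_pow 7 s hs]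

variable {x : ℂ} (hint : IsIntegral ℤ x) (hx0 : x ≠ 0) (hx : ‖x‖ < 1)
  (hquot : IsAlgebraic ℚ (discQuot x))

include hint hx0 hx hquot

/-- The equations say that, for each `k ≤ s ^ 3`, the first `512 s ^ 7` coefficients of the form
interpolating the auxiliary function at `x ^ k` vanish. -/
lemma exists_auxFun_eq_zero : ∃ C : ℝ, 1 ≤ C ∧ ∀ᶠ s : ℕ in atTop,
    ∃ a : Fin (s ^ 4) × Fin (s ^ 4) × Fin (s ^ 4) → ℤ, a ≠ 0 ∧
      (∀ t, |(a t : ℝ)| ≤ Real.exp (C * s ^ 5)) ∧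
      ∀ p : ℕ, p.Prime → p ≠ 2 → p ≤ s ^ 3 → auxFun (s ^ 4) a (x ^ p) = 0 := by
  obtain ⟨D, hD, hDint⟩ :=
    ((IsFractionRing.isAlgebraic_iff ℤ ℚ ℂ).2 hquot).exists_integral_multiple
  rw [zsmul_eq_mul] at hDint
  obtain ⟨d, A, hA, hd, hsolve⟩ := exists_sum_mul_monomial_eq_zero hint hDint
  obtain ⟨C, hC, hcoeff⟩ := exists_abs_pow_mul_coeff_interpForm_le hD
  choose e he using fun i j k s : ℕ => hasIntDiscSeries_interpForm (s ^ 4) i j k.succ_ne_zero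
  have hlogA : 0 ≤ Real.log A := Real.log_nonneg (Nat.one_le_cast.2 hA)
  have hd1 : (1 : ℝ) ≤ d := Nat.one_le_cast.2 hd
  refine ⟨(C + 3 * Real.log A + 12) * (1024 * d), by nlinarith, ?_⟩
  filter_upwards [eventually_ge_atTop (1024 * d)] with s hs
  have hs1 : 1 ≤ s := by omega
  have hsR : (1 : ℝ) ≤ s := Nat.one_le_cast.2 hs1
  have : NeZero (s ^ 3) := ⟨by positivity⟩
  have : NeZero (512 * s ^ 7) := ⟨by positivity⟩
  obtain ⟨a, ha0, hbound, hzero⟩ := hsolve (Fin (s ^ 3) × Fin (512 * s ^ 7))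
    (Fin (s ^ 4) × Fin (s ^ 4) × Fin (s ^ 4))
    (fun y t => D ^ (2 * s ^ 4 - t.2.1 - t.2.2 : ℕ) * e t.2.1 t.2.2 y.1 s y.2)
    (fun y t => (y.1 + 1) * t.1) (fun _ t => t.2.1 + t.2.2) (C * s ^ 5) (s ^ 3 * s ^ 4 + 2 * s ^ 4)
    (by positivity)
    (fun y t => by
      have := Nat.mul_le_mul (Nat.succ_le_of_lt y.1.2) t.1.2.le
      simp only [Nat.succ_eq_add_one] at this
      omega)
    (fun y t => hcoeff s hs1 _ _ _ _ _ t.2.1.2 t.2.2.2 y.1.1.succ_ne_zero y.2.2 (by omega) _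
      (he t.2.1 t.2.2 y.1 s))
    (by
      simp only [Fintype.card_prod, Fintype.card_fin]
      calc 2 * (d * (s ^ 3 * (512 * s ^ 7))) = 1024 * d * s ^ 10 := by ring
        _ ≤ s ^ 2 * s ^ 10 := Nat.mul_le_mul_right _ (hs.trans (Nat.le_self_pow two_ne_zero s))
        _ = s ^ 4 * (s ^ 4 * s ^ 4) := by ring)
  refine ⟨a, ha0, fun t => (hbound t).trans (Real.exp_le_exp.2 ?_), fun p hp hp2 hps => ?_⟩
  · have := siegel_exponent_le hsR (by positivity : 0 ≤ C) hlogA (by positivity : (0 : ℝ) ≤ d)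
    simp only [Fintype.card_prod, Fintype.card_fin]
    push_cast
    rwa [← pow_add (s : ℝ) 4 4, ← pow_add (s : ℝ) 4 8]
  · obtain ⟨k, rfl⟩ := Nat.exists_eq_succ_of_ne_zero hp.ne_zero
    exact auxFun_pow_eq_zero hx0 hx hp hp2 (sturm_bound_lt hs1 hps) hD
      (fun i j => he i j k s) a fun m hm => hzero (⟨k, hps⟩, ⟨m, hm⟩)

end Construction

/-! ### The auxiliary function near the cusp -/

section Cusp

open Real

lemma exists_norm_auxFun_le : ∃ C : ℝ, 1 ≤ C ∧ ∀ (W : ℕ) (a : Fin W × Fin W × Fin W → ℤ) (A : ℝ),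
    (∀ t, |(a t : ℝ)| ≤ A) → ∀ z : ℂ, ‖z‖ < 1 →
      ‖auxFun W a z‖ ≤ W ^ 3 * A * (C ^ (4 * W) * (1 / (1 - ‖z‖)) ^ (24 * W)) := by
  obtain ⟨C, hC, hgrowth⟩ := exists_norm_qDisc_pow_le
  refine ⟨C, hC, fun W a A ha z hz => ?_⟩
  set X := C * (1 / (1 - ‖z‖)) ^ 6 with hX
  have hX1 : 1 ≤ X := one_le_mul_of_one_le_of_one_le hC <| one_le_pow₀ <|
    one_le_one_div (sub_pos.2 hz) (sub_le_self _ (norm_nonneg z))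
  have h1 : ‖qDisc z‖ ≤ X := by simpa only [pow_one] using hgrowth z hz 1 one_ne_zero
  have h2 : ‖qDisc (z ^ 2)‖ ≤ X := hgrowth z hz 2 two_ne_zero
  have hterm : ∀ t : Fin W × Fin W × Fin W, ‖(a t : ℂ) * (z ^ (t.1 : ℕ) *
      (qDisc z ^ (2 * t.2.1 : ℕ) * qDisc (z ^ 2) ^ (2 * t.2.2 : ℕ)))‖ ≤ A * X ^ (4 * W) := by
    intro t
    have hA : 0 ≤ A := (abs_nonneg _).trans (ha t)
    simp only [norm_mul, norm_pow _ (t.1 : ℕ), norm_pow (qDisc _), Complex.norm_intCast]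
    calc |(a t : ℝ)| * (‖z‖ ^ (t.1 : ℕ) *
          (‖qDisc z‖ ^ (2 * t.2.1 : ℕ) * ‖qDisc (z ^ 2)‖ ^ (2 * t.2.2 : ℕ)))
        ≤ A * (1 * (X ^ (2 * t.2.1 : ℕ) * X ^ (2 * t.2.2 : ℕ))) := by
          gcongr
          exacts [ha t, pow_le_one₀ (norm_nonneg _) hz.le]
      _ ≤ A * X ^ (4 * W) := by
          rw [one_mul, ← pow_add]
          exact mul_le_mul_of_nonneg_left (pow_le_pow_right₀ hX1 (by omega)) hA
  calc ‖auxFun W a z‖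
      ≤ ∑ _ : Fin W × Fin W × Fin W, A * X ^ (4 * W) := norm_sum_le_of_le _ fun _ _ => hterm _
    _ = W ^ 3 * A * X ^ (4 * W) := by
        simp only [Finset.sum_const, Finset.card_univ, Fintype.card_prod, Fintype.card_fin,
          nsmul_eq_mul]
        push_cast
        ring
    _ = W ^ 3 * A * (C ^ (4 * W) * (1 / (1 - ‖z‖)) ^ (24 * W)) := by
        rw [hX, mul_pow, ← pow_mul]
        congr 3
        ring

lemma half_le_one_sub_exp_neg_pi_mul {y : ℝ} (hy : 0 ≤ y) (hy1 : y ≤ 1) :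
    y / 2 ≤ 1 - exp (-π * y) := by
  have hden : 0 < 1 + π * y := by positivity
  have hexp : exp (-π * y) ≤ (1 + π * y)⁻¹ := by
    rw [neg_mul, exp_neg]
    exact inv_anti₀ hden (by linarith [add_one_le_exp (π * y)])
  have hinv : (1 + π * y)⁻¹ ≤ 1 - y / 2 := by
    rw [inv_le_iff_one_le_mul₀ hden]
    nlinarith [pi_gt_three, mul_nonneg hy (sub_nonneg.2 hy1)]
  linarith

lemma exists_norm_auxFun_exp_le : ∃ C : ℝ, 1 ≤ C ∧
    ∀ (W : ℕ) (a : Fin W × Fin W × Fin W → ℤ) (A : ℝ), (∀ t, |(a t : ℝ)| ≤ A) →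
    ∀ (α : ℕ → ℂ) (M : ℕ), HasDiscSeries α (auxFun W a) → (∀ n < M, α n = 0) →
    ∀ y : ℝ, 0 < y → y ≤ 1 → ‖auxFun W a (exp (-2 * π * y) : ℝ)‖ ≤
      exp (-π * y * M) * (W ^ 3 * A * (C ^ (4 * W) * (2 / y) ^ (24 * W))) := by
  obtain ⟨C, hC, hbound⟩ := exists_norm_auxFun_le
  refine ⟨C, hC, fun W a A ha α M hα hM y hy hy1 => ?_⟩
  have hr1 : exp (-π * y) < 1 := Real.exp_lt_one_iff.2 (by nlinarith [pi_pos])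
  have hz : ‖((exp (-2 * π * y) : ℝ) : ℂ)‖ = exp (-π * y) * exp (-π * y) := by
    rw [Complex.norm_real, norm_of_nonneg (exp_pos _).le, ← exp_add]
    congr 1
    ring
  have hcircle : ∀ z : ℂ, ‖z‖ = exp (-π * y) →
      ‖auxFun W a z‖ ≤ W ^ 3 * A * (C ^ (4 * W) * (2 / y) ^ (24 * W)) := by
    intro z hzr
    have hinv : 1 / (1 - ‖z‖) ≤ 2 / y := by
      rw [hzr, ← one_div_div y]
      exact one_div_le_one_div_of_le (by positivity) (half_le_one_sub_exp_neg_pi_mul hy.le hy1)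
    refine (hbound W a A ha z (hzr ▸ hr1)).trans ?_
    rcases Nat.eq_zero_or_pos W with rfl | hW
    · simp
    · have hA : 0 ≤ A := (abs_nonneg _).trans (ha (⟨0, hW⟩, ⟨0, hW⟩, ⟨0, hW⟩))
      have hpos : 0 < 1 - ‖z‖ := sub_pos.2 (hzr ▸ hr1)
      gcongr
  have hSchwarz := hα.norm_le_div_pow_mul hM (exp_pos (-π * y)) hr1 hcircle
    (hz ▸ mul_le_of_le_one_left (exp_pos _).le hr1.le)
  rwa [hz, mul_div_cancel_right₀ _ (exp_pos _).ne', ← exp_nat_mul, mul_comm (M : ℝ)] at hSchwarz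

/-- By inversion, the values of `Δ` at `e^(-2π y)` and at its square have leading terms
`e^(-2π / y) / y¹²` and `e^(-π / y) / (2 y)¹²`; here `u` and `v` are the correction factors. -/
lemma exists_qDisc_exp_eq {y : ℝ} (hy : 0 < y) (hy1 : y ≤ 1) : ∃ u v : ℝ,
    (0 ≤ u ∧ u ≤ 1 ∧ 1 - u ≤ 48 * exp (-π / y)) ∧ (0 ≤ v ∧ v ≤ 1 ∧ 1 - v ≤ 48 * exp (-π / y)) ∧
    qDisc (exp (-2 * π * y) : ℝ) = ((exp (-π / y) ^ 2 * u / y ^ 12 : ℝ) : ℂ) ∧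
    qDisc (((exp (-2 * π * y) : ℝ) : ℂ) ^ 2) = ((exp (-π / y) * v / (2 * y) ^ 12 : ℝ) : ℂ) := by
  set ε := exp (-π / y) with hε
  have hε0 : 0 < ε := exp_pos _
  have hε1 : ε ≤ 1 / 2 := by
    have h1 : ε ≤ exp (-1) := by
      rw [hε, exp_le_exp, div_le_iff₀ hy]
      nlinarith [pi_gt_three]
    linarith [exp_neg_one_lt_d9]
  have hε2 : ε ^ 2 ≤ ε := by nlinarith
  have hexp1 : exp (-2 * π / y) = ε ^ 2 := by
    rw [hε, ← exp_nat_mul]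
    congr 1
    push_cast
    ring
  have hexp2 : exp (-2 * π / (2 * y)) = ε := by
    rw [hε]
    congr 1
    field_simp
  have hsq : ((exp (-2 * π * y) : ℝ) : ℂ) ^ 2 = ((exp (-2 * π * (2 * y)) : ℝ) : ℂ) := by
    rw [← Complex.ofReal_pow, ← exp_nat_mul]
    congr 2
    push_cast
    ring
  obtain ⟨u, hu, hu0, hu1, hu2⟩ := exists_qDisc_ofReal_eq (x := ε ^ 2) (by positivity) (by linarith)
  obtain ⟨v, hv, hv0, hv1, hv2⟩ := exists_qDisc_ofReal_eq hε0 hε1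
  refine ⟨u, v, ⟨hu0, hu1, by linarith⟩, ⟨hv0, hv1, hv2⟩, ?_, ?_⟩
  · rw [qDisc_exp_inversion hy, hexp1, hu]
    push_cast
    ring
  · rw [hsq, qDisc_exp_inversion (by positivity), hexp2, hv]
    push_cast
    ring

/-- The term of index `t = (l, i, j)` of `y ^ (24 W) (2 y) ^ (24 W) auxFun W a (e^(-2π y))` is
`auxTerm W a t y` times `e^(-2π (2 i + j) / y)`, up to a factor which tends to `1` as `y → 0`. The
subtractions do not truncate since `i, j < W`. -/
def auxTerm (W : ℕ) (a : Fin W × Fin W × Fin W → ℤ) (t : Fin W × Fin W × Fin W) (y : ℝ) : ℝ :=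
  a t * (exp (-2 * π * (t.1 : ℕ) * y) *
    (y ^ (24 * (W - t.2.1) : ℕ) * (2 * y) ^ (24 * (W - t.2.2) : ℕ)))

/-- The part of `auxFun W a (e^(-2π y))` of order `e^(-2π n / y)`, after the normalisation of
`auxTerm`. It dominates as `y → 0` when `n` is the least value of `2 i + j` which occurs. -/
def leadPart (W : ℕ) (a : Fin W × Fin W × Fin W → ℤ) (n : ℕ) (y : ℝ) : ℝ :=
  ∑ t with 2 * (t.2.1 : ℕ) + t.2.2 = n, auxTerm W a t y

lemma abs_auxTerm_le {W : ℕ} {a : Fin W × Fin W × Fin W → ℤ} {A : ℝ} (ha : ∀ t, |(a t : ℝ)| ≤ A)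
    {y : ℝ} (hy : 0 ≤ y) (hy1 : y ≤ 1) (t : Fin W × Fin W × Fin W) :
    |auxTerm W a t y| ≤ A * 2 ^ (24 * W) := by
  have hA : 0 ≤ A := (abs_nonneg _).trans (ha t)
  have hexp : exp (-2 * π * (t.1 : ℕ) * y) ≤ 1 := by
    have : 0 ≤ π * (t.1 : ℕ) * y := by positivity
    rw [exp_le_one_iff]
    linarith
  have hpow : (2 * y) ^ (24 * (W - t.2.2) : ℕ) ≤ 2 ^ (24 * W) :=
    (pow_le_pow_left₀ (by positivity) (by linarith) _).trans
      (pow_le_pow_right₀ one_le_two (by omega))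
  have hnonneg : 0 ≤ exp (-2 * π * (t.1 : ℕ) * y) *
      (y ^ (24 * (W - t.2.1) : ℕ) * (2 * y) ^ (24 * (W - t.2.2) : ℕ)) := by positivity
  rw [auxTerm, abs_mul, abs_of_nonneg hnonneg]
  calc |(a t : ℝ)| * (exp (-2 * π * (t.1 : ℕ) * y) *
        (y ^ (24 * (W - t.2.1) : ℕ) * (2 * y) ^ (24 * (W - t.2.2) : ℕ)))
      ≤ A * (1 * (1 * 2 ^ (24 * W))) := by
        gcongr
        exacts [ha t, pow_le_one₀ hy hy1]
    _ = A * 2 ^ (24 * W) := by ring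

lemma pow_mul_div_pow_pow {w c : ℝ} (hw : w ≠ 0) {W i : ℕ} (hi : i ≤ W) :
    w ^ (24 * W) * (c / w ^ 12) ^ (2 * i) = w ^ (24 * (W - i)) * c ^ (2 * i) := by
  obtain ⟨k, rfl⟩ := Nat.exists_eq_add_of_le' hi
  rw [Nat.add_sub_cancel, div_pow, ← pow_mul, mul_add, pow_add, show 12 * (2 * i) = 24 * i by ring]
  field_simp

lemma mul_auxFun_exp_eq (W : ℕ) (a : Fin W × Fin W × Fin W → ℤ) {y ε u v : ℝ} (hy : y ≠ 0)
    (hu : qDisc (exp (-2 * π * y) : ℝ) = ((ε ^ 2 * u / y ^ 12 : ℝ) : ℂ))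
    (hv : qDisc (((exp (-2 * π * y) : ℝ) : ℂ) ^ 2) = ((ε * v / (2 * y) ^ 12 : ℝ) : ℂ)) :
    ((y ^ (24 * W) * (2 * y) ^ (24 * W) : ℝ) : ℂ) * auxFun W a (exp (-2 * π * y) : ℝ) =
      ((∑ t : Fin W × Fin W × Fin W, auxTerm W a t y *
        (ε ^ (2 * (2 * t.2.1 + t.2.2) : ℕ) * (u ^ (2 * t.2.1 : ℕ) * v ^ (2 * t.2.2 : ℕ))) : ℝ) :
          ℂ) := by
  rw [auxFun, hu, hv, Finset.mul_sum, Complex.ofReal_sum]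
  refine Finset.sum_congr rfl fun t _ => ?_
  have h1 := pow_mul_div_pow_pow (c := ε ^ 2 * u) hy t.2.1.is_lt.le
  have h2 := pow_mul_div_pow_pow (c := ε * v) (mul_ne_zero two_ne_zero hy) t.2.2.is_lt.le
  have hexp : exp (-2 * π * (t.1 : ℕ) * y) = exp (-2 * π * y) ^ (t.1 : ℕ) := by
    rw [← exp_nat_mul]
    ring_nf
  have hε :
      ε ^ (2 * (2 * t.2.1 + t.2.2) : ℕ) = (ε ^ 2) ^ (2 * t.2.1 : ℕ) * ε ^ (2 * t.2.2 : ℕ) := by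
    rw [← pow_mul, ← pow_add]
    ring_nf
  rw [mul_pow _ u] at h1
  rw [mul_pow ε] at h2
  rw [auxTerm, hexp, hε]
  generalize exp (-2 * π * y) = x
  norm_cast
  linear_combination (a t : ℝ) * x ^ (t.1 : ℕ) *
    ((2 * y) ^ (24 * W) * (ε * v / (2 * y) ^ 12) ^ (2 * t.2.2 : ℕ) * h1 +
      y ^ (24 * (W - t.2.1) : ℕ) * ((ε ^ 2) ^ (2 * t.2.1 : ℕ) * u ^ (2 * t.2.1 : ℕ)) * h2)

lemma one_sub_pow_mul_pow_le {u v η : ℝ} (hu : 0 ≤ u ∧ u ≤ 1 ∧ 1 - u ≤ η)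
    (hv : 0 ≤ v ∧ v ≤ 1 ∧ 1 - v ≤ η) (m n : ℕ) : 1 - u ^ m * v ^ n ≤ (m + n) * η := by
  obtain ⟨hu0, hu1, hu⟩ := hu
  obtain ⟨hv0, hv1, hv⟩ := hv
  have hum := one_add_mul_sub_le_pow (a := u) (by linarith) m
  have hvn := one_add_mul_sub_le_pow (a := v) (by linarith) n
  have hm : (m : ℝ) * (1 - u) ≤ m * η := by gcongr
  have hn : (n : ℝ) * (1 - v) ≤ n * η := by gcongr
  nlinarith [mul_nonneg (sub_nonneg.2 (pow_le_one₀ (n := m) hu0 hu1))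
    (sub_nonneg.2 (pow_le_one₀ (n := n) hv0 hv1))]

lemma abs_ite_sub_pow_mul_le {ε u v : ℝ} (hε : 0 ≤ ε) (hε1 : ε ≤ 1)
    (hu : 0 ≤ u ∧ u ≤ 1 ∧ 1 - u ≤ 48 * ε) (hv : 0 ≤ v ∧ v ≤ 1 ∧ 1 - v ≤ 48 * ε) {W i j : ℕ}
    (hi : i < W) (hj : j < W) (k : ℕ) :
    |(if k = 0 then 1 else 0) - ε ^ (2 * k) * (u ^ (2 * i) * v ^ (2 * j))| ≤ 192 * W * ε := by
  have huv : u ^ (2 * i) * v ^ (2 * j) ≤ 1 := mul_le_one₀ (pow_le_one₀ hu.1 hu.2.1)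
    (pow_nonneg hv.1 _) (pow_le_one₀ hv.1 hv.2.1)
  have huv0 : 0 ≤ u ^ (2 * i) * v ^ (2 * j) := mul_nonneg (pow_nonneg hu.1 _) (pow_nonneg hv.1 _)
  split_ifs with hk
  · rw [hk, mul_zero, pow_zero, one_mul, abs_of_nonneg (sub_nonneg.2 huv)]
    calc 1 - u ^ (2 * i) * v ^ (2 * j) ≤ ((2 * i : ℕ) + (2 * j : ℕ)) * (48 * ε) :=
          one_sub_pow_mul_pow_le hu hv _ _
      _ ≤ (4 * W : ℕ) * (48 * ε) := by
          gcongr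
          exact_mod_cast (by omega : 2 * i + 2 * j ≤ 4 * W)
      _ = 192 * W * ε := by
          push_cast
          ring
  · have hW : (1 : ℝ) ≤ W := by exact_mod_cast Nat.one_le_of_lt hi
    rw [zero_sub, abs_neg, abs_of_nonneg (by positivity)]
    calc ε ^ (2 * k) * (u ^ (2 * i) * v ^ (2 * j)) ≤ ε * 1 := by
          gcongr
          exact pow_le_of_le_one hε hε1 (by omega)
      _ ≤ 192 * W * ε := by nlinarith

lemma abs_ite_auxTerm_sub_le {W : ℕ} {a : Fin W × Fin W × Fin W → ℤ} {A : ℝ}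
    (ha : ∀ t, |(a t : ℝ)| ≤ A) {n : ℕ} {y ε u v X : ℝ} (hy : 0 ≤ y) (hy1 : y ≤ 1) (hε : 0 ≤ ε)
    (hε1 : ε ≤ 1) (hu : 0 ≤ u ∧ u ≤ 1 ∧ 1 - u ≤ 48 * ε) (hv : 0 ≤ v ∧ v ≤ 1 ∧ 1 - v ≤ 48 * ε)
    (hX : X * ε ^ (2 * n) = 1) (t : Fin W × Fin W × Fin W)
    (hn : a t ≠ 0 → n ≤ 2 * (t.2.1 : ℕ) + t.2.2) :
    |(if 2 * (t.2.1 : ℕ) + t.2.2 = n then auxTerm W a t y else 0) -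
      X * (auxTerm W a t y * (ε ^ (2 * (2 * t.2.1 + t.2.2) : ℕ) *
        (u ^ (2 * t.2.1 : ℕ) * v ^ (2 * t.2.2 : ℕ))))| ≤ A * 2 ^ (24 * W) * (192 * W * ε) := by
  have hA : 0 ≤ A := (abs_nonneg _).trans (ha t)
  by_cases hat : a t = 0
  · simp only [auxTerm, hat, Int.cast_zero, zero_mul, ite_self, mul_zero, sub_zero, abs_zero]
    positivity
  obtain ⟨k, hk⟩ := Nat.exists_eq_add_of_le (hn hat)
  have hfactor : (if 2 * (t.2.1 : ℕ) + t.2.2 = n then auxTerm W a t y else 0) -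
      X * (auxTerm W a t y * (ε ^ (2 * (2 * t.2.1 + t.2.2) : ℕ) *
        (u ^ (2 * t.2.1 : ℕ) * v ^ (2 * t.2.2 : ℕ)))) = auxTerm W a t y *
      ((if k = 0 then 1 else 0) - ε ^ (2 * k) * (u ^ (2 * t.2.1 : ℕ) * v ^ (2 * t.2.2 : ℕ))) := by
    rw [hk, mul_add, pow_add]
    simp only [Nat.add_eq_left, mul_sub, mul_ite, mul_one, mul_zero]
    linear_combination (-auxTerm W a t y * ε ^ (2 * k) *
      (u ^ (2 * t.2.1 : ℕ) * v ^ (2 * t.2.2 : ℕ))) * hX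
  rw [hfactor, abs_mul]
  exact mul_le_mul (abs_auxTerm_le ha hy hy1 t)
    (abs_ite_sub_pow_mul_le hε hε1 hu hv t.2.1.is_lt t.2.2.is_lt k) (abs_nonneg _) (by positivity)

lemma abs_leadPart_le {W : ℕ} {a : Fin W × Fin W × Fin W → ℤ} {A : ℝ} (ha : ∀ t, |(a t : ℝ)| ≤ A)
    {n : ℕ} (hn : ∀ t, a t ≠ 0 → n ≤ 2 * (t.2.1 : ℕ) + t.2.2) {y : ℝ} (hy : 0 < y) (hy1 : y ≤ 1) :
    |leadPart W a n y| ≤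
      exp (2 * n * π / y) * (2 ^ (24 * W) * ‖auxFun W a (exp (-2 * π * y) : ℝ)‖) +
        W ^ 3 * (A * 2 ^ (24 * W) * (192 * W * exp (-π / y))) := by
  obtain ⟨u, v, hu, hv, hqu, hqv⟩ := exists_qDisc_exp_eq hy hy1
  set ε := exp (-π / y) with hε
  have hε1 : ε ≤ 1 := exp_le_one_iff.2 (div_nonpos_of_nonpos_of_nonneg (by linarith [pi_pos]) hy.le)
  set X := exp (2 * n * π / y) with hX
  have hXε : X * ε ^ (2 * n) = 1 := by
    rw [hX, hε, ← exp_nat_mul, ← exp_add, exp_eq_one_iff]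
    push_cast
    ring
  have hnorm := congrArg norm (mul_auxFun_exp_eq W a hy.ne' hqu hqv)
  set S := ∑ t : Fin W × Fin W × Fin W, auxTerm W a t y *
    (ε ^ (2 * (2 * t.2.1 + t.2.2) : ℕ) * (u ^ (2 * t.2.1 : ℕ) * v ^ (2 * t.2.2 : ℕ))) with hS
  have hSle : |S| ≤ 2 ^ (24 * W) * ‖auxFun W a (exp (-2 * π * y) : ℝ)‖ := by
    have hpow : y ^ (24 * W) * (2 * y) ^ (24 * W) ≤ 1 * 2 ^ (24 * W) := by
      gcongr
      exacts [pow_le_one₀ hy.le hy1, by linarith]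
    rw [norm_mul, Complex.norm_real, Complex.norm_real, norm_of_nonneg (by positivity)] at hnorm
    rw [← norm_eq_abs, ← hnorm, ← one_mul (2 ^ (24 * W) : ℝ)]
    gcongr
  have hdiff : |leadPart W a n y - X * S| ≤ W ^ 3 * (A * 2 ^ (24 * W) * (192 * W * ε)) := by
    rw [leadPart, Finset.sum_filter, hS, Finset.mul_sum, ← Finset.sum_sub_distrib]
    refine (Finset.abs_sum_le_sum_abs _ _).trans ((Finset.sum_le_sum fun t _ =>
      abs_ite_auxTerm_sub_le ha hy.le hy1 (exp_pos _).le hε1 hu hv hXε t (hn t)).trans_eq ?_)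
    simp only [Finset.sum_const, Finset.card_univ, Fintype.card_prod, Fintype.card_fin,
      nsmul_eq_mul]
    push_cast
    ring
  calc |leadPart W a n y| ≤ |X * S| + |leadPart W a n y - X * S| := by
        simpa only [add_sub_cancel] using abs_add_le (X * S) (leadPart W a n y - X * S)
    _ ≤ _ := by
        rw [abs_mul, abs_of_pos (exp_pos _)]
        gcongr

end Cusp

/-! ### The zero estimate -/

section ZeroEstimate

open Real Polynomial Filter

/-- The coefficient of `e^(-2π l y)` in `leadPart W a n y`, as a polynomial in `y`. -/
def leadPoly (W : ℕ) (a : Fin W × Fin W × Fin W → ℤ) (n : ℕ) (l : Fin W) : ℤ[X] :=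
  ∑ t : Fin W × Fin W with 2 * (t.1 : ℕ) + t.2 = n,
    C (a (l, t) * 2 ^ (24 * (W - t.2) : ℕ)) * X ^ (24 * (W - t.1) + 24 * (W - t.2) : ℕ)

lemma natDegree_leadPoly_le (W : ℕ) (a : Fin W × Fin W × Fin W → ℤ) (n : ℕ) (l : Fin W) :
    (leadPoly W a n l).natDegree ≤ 48 * W :=
  natDegree_sum_le_of_forall_le _ _ fun _ _ => (natDegree_C_mul_X_pow_le _ _).trans (by omega)

lemma aeval_leadPoly (W : ℕ) (a : Fin W × Fin W × Fin W → ℤ) (n : ℕ) (l : Fin W) (y : ℝ) :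
    aeval y (leadPoly W a n l) = ∑ t : Fin W × Fin W with 2 * (t.1 : ℕ) + t.2 = n,
      (a (l, t) : ℝ) * 2 ^ (24 * (W - t.2) : ℕ) * y ^ (24 * (W - t.1) + 24 * (W - t.2) : ℕ) := by
  simp [leadPoly, map_ofNat (aeval y) 2]

lemma leadPart_eq_sum (W : ℕ) (a : Fin W × Fin W × Fin W → ℤ) (n : ℕ) (y : ℝ) :
    leadPart W a n y = ∑ l : Fin W, exp (-2 * π * (l : ℕ) * y) * aeval y (leadPoly W a n l) := by
  rw [leadPart, Finset.sum_filter, Fintype.sum_prod_type]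
  refine Finset.sum_congr rfl fun l _ => ?_
  rw [← Finset.sum_filter, aeval_leadPoly, Finset.mul_sum]
  refine Finset.sum_congr rfl fun t _ => ?_
  rw [auxTerm, mul_pow]
  ring

/-- The indices with `2 i + j = n` and the same `l` give distinct powers of `y`. -/
lemma leadPoly_ne_zero {W : ℕ} {a : Fin W × Fin W × Fin W → ℤ} {l i j : Fin W}
    (ha : a (l, i, j) ≠ 0) : leadPoly W a (2 * i + j) l ≠ 0 := by
  intro h
  have hcoeff := congrArg (coeff · (24 * (W - i) + 24 * (W - j))) h
  simp only [leadPoly, finsetSum_coeff, coeff_zero] at hcoeff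
  rw [Finset.sum_eq_single (i, j)] at hcoeff
  · rw [coeff_C_mul_X_pow, if_pos rfl] at hcoeff
    exact mul_ne_zero ha (by positivity) hcoeff
  · rintro ⟨i', j'⟩ ht hne
    rw [coeff_C_mul_X_pow, if_neg]
    contrapose! hne
    have hij := (Finset.mem_filter.1 ht).2
    dsimp only at hij hne
    ext <;> dsimp only <;> omega
  · simp

lemma abs_aeval_leadPoly_le {W : ℕ} {a : Fin W × Fin W × Fin W → ℤ} {A : ℝ}
    (ha : ∀ t, |(a t : ℝ)| ≤ A) (n : ℕ) (l : Fin W) {y : ℝ} (hy : 1 ≤ y) :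
    |aeval y (leadPoly W a n l)| ≤ W ^ 2 * (A * 2 ^ (24 * W) * y ^ (48 * W)) := by
  have hA : 0 ≤ A := (abs_nonneg _).trans (ha (l, l, l))
  have hy0 : 0 ≤ y := zero_le_one.trans hy
  have hterm : ∀ t : Fin W × Fin W, |(a (l, t) : ℝ) * 2 ^ (24 * (W - t.2) : ℕ) *
      y ^ (24 * (W - t.1) + 24 * (W - t.2) : ℕ)| ≤ A * 2 ^ (24 * W) * y ^ (48 * W) := by
    intro t
    rw [abs_mul, abs_mul, abs_of_nonneg (by positivity : (0 : ℝ) ≤ 2 ^ (24 * (W - t.2) : ℕ)),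
      abs_of_nonneg (pow_nonneg hy0 _)]
    gcongr
    exacts [ha (l, t), one_le_two, by omega, by omega]
  rw [aeval_leadPoly]
  calc |∑ t : Fin W × Fin W with 2 * (t.1 : ℕ) + t.2 = n, (a (l, t) : ℝ) *
        2 ^ (24 * (W - t.2) : ℕ) * y ^ (24 * (W - t.1) + 24 * (W - t.2) : ℕ)|
      ≤ ∑ _ : Fin W × Fin W, A * 2 ^ (24 * W) * y ^ (48 * W) :=
        (Finset.abs_sum_le_sum_abs _ _).trans ((Finset.sum_le_sum fun _ _ => hterm _).trans
          (Finset.sum_le_sum_of_subset_of_nonneg (Finset.subset_univ _) fun _ _ _ => by positivity))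
    _ = W ^ 2 * (A * 2 ^ (24 * W) * y ^ (48 * W)) := by
        simp only [Finset.sum_const, Finset.card_univ, Fintype.card_prod, Fintype.card_fin,
          nsmul_eq_mul]
        push_cast
        ring

lemma exists_min_level {W : ℕ} {a : Fin W × Fin W × Fin W → ℤ} (ha : a ≠ 0) :
    ∃ n ≤ 3 * W, (∀ t, a t ≠ 0 → n ≤ 2 * (t.2.1 : ℕ) + t.2.2) ∧
      ∃ l₀, leadPoly W a n l₀ ≠ 0 ∧ ∀ l < l₀, leadPoly W a n l = 0 := by
  obtain ⟨t₁, ht₁⟩ := Function.ne_iff.1 ha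
  obtain ⟨⟨l, i, j⟩, ht, hmin⟩ := Set.exists_min_image {t | a t ≠ 0}
    (fun t => 2 * (t.2.1 : ℕ) + t.2.2) (Set.toFinite _) ⟨t₁, ht₁⟩
  obtain ⟨l₀, hl₀, hl₀min⟩ := wellFounded_lt.has_min {l | leadPoly W a (2 * i + j) l ≠ 0}
    ⟨l, leadPoly_ne_zero ht⟩
  exact ⟨2 * i + j, by omega, hmin, l₀, hl₀, fun l hl => not_not.1 fun h => hl₀min l h hl⟩

lemma exists_eval_natCast_ne_zero {P : ℤ[X]} (hP : P ≠ 0) {n : ℕ} (hn : P.natDegree ≤ n) (m : ℕ) :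
    ∃ Y ∈ Finset.Icc m (m + n), P.eval (Y : ℤ) ≠ 0 := by
  by_contra! hroots
  refine hP (eq_zero_of_natDegree_lt_card_of_eval_eq_zero' P
    ((Finset.Icc m (m + n)).map Nat.castEmbedding) (Finset.forall_mem_map.2 hroots) ?_)
  rw [Finset.card_map, Nat.card_Icc]
  omega

lemma half_pow_le_abs_sum_pow_mul {W : ℕ} {x K : ℝ} (hx : 0 ≤ x) (hx1 : x ≤ 1) {c : Fin W → ℝ}
    {l₀ : Fin W} (hl₀ : 1 ≤ |c l₀|) (hlt : ∀ l < l₀, c l = 0) (hc : ∀ l, |c l| ≤ K)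
    (hsmall : x * (W * K) ≤ 1 / 2) : 1 / 2 * x ^ W ≤ |∑ l : Fin W, x ^ (l : ℕ) * c l| := by
  have hK : 0 ≤ K := (abs_nonneg _).trans (hc l₀)
  have hterm : ∀ l ∈ Finset.univ.erase l₀, |x ^ (l : ℕ) * c l| ≤ x ^ ((l₀ : ℕ) + 1) * K := by
    intro l hl
    rcases lt_or_gt_of_ne (Finset.ne_of_mem_erase hl) with h | h
    · rw [hlt l h, mul_zero, abs_zero]
      positivity
    · rw [abs_mul, abs_of_nonneg (pow_nonneg hx _)]
      exact mul_le_mul (pow_le_pow_of_le_one hx hx1 h) (hc l) (abs_nonneg _) (pow_nonneg hx _)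
  have htail : |∑ l ∈ Finset.univ.erase l₀, x ^ (l : ℕ) * c l| ≤ x ^ (l₀ : ℕ) * (1 / 2) := by
    have hcard : ((Finset.univ.erase l₀).card : ℝ) ≤ W := by
      exact_mod_cast (Finset.card_le_univ _).trans_eq (Fintype.card_fin W)
    calc |∑ l ∈ Finset.univ.erase l₀, x ^ (l : ℕ) * c l|
        ≤ (Finset.univ.erase l₀).card • (x ^ ((l₀ : ℕ) + 1) * K) :=
          (Finset.abs_sum_le_sum_abs _ _).trans (Finset.sum_le_card_nsmul _ _ _ hterm)
      _ ≤ W * (x ^ ((l₀ : ℕ) + 1) * K) := by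
          rw [nsmul_eq_mul]
          gcongr
      _ = x ^ (l₀ : ℕ) * (x * (W * K)) := by ring
      _ ≤ x ^ (l₀ : ℕ) * (1 / 2) := by gcongr
  have hhead : x ^ (l₀ : ℕ) ≤ |x ^ (l₀ : ℕ) * c l₀| := by
    rw [abs_mul, abs_of_nonneg (pow_nonneg hx _)]
    exact le_mul_of_one_le_right (pow_nonneg hx _) hl₀
  have hW : x ^ W ≤ x ^ (l₀ : ℕ) := pow_le_pow_of_le_one hx hx1 l₀.is_lt.le
  have htri := abs_sub_abs_le_abs_add (x ^ (l₀ : ℕ) * c l₀)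
    (∑ l ∈ Finset.univ.erase l₀, x ^ (l : ℕ) * c l)
  rw [Finset.add_sum_erase _ (fun l : Fin W => x ^ (l : ℕ) * c l) (Finset.mem_univ l₀)] at htri
  linarith

lemma half_exp_le_abs_leadPart {W : ℕ} {a : Fin W × Fin W × Fin W → ℤ} {A : ℝ}
    (ha : ∀ t, |(a t : ℝ)| ≤ A) {n : ℕ} {l₀ : Fin W} {Y : ℕ} (hY : 1 ≤ Y)
    (hl₀ : (leadPoly W a n l₀).eval (Y : ℤ) ≠ 0) (hlt : ∀ l < l₀, leadPoly W a n l = 0)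
    (hsmall : exp (-2 * π * Y) * (W * (W ^ 2 * (A * 2 ^ (24 * W) * (Y : ℝ) ^ (48 * W)))) ≤ 1 / 2) :
    1 / 2 * exp (-2 * π * Y) ^ W ≤ |leadPart W a n Y| := by
  have hint : aeval (Y : ℝ) (leadPoly W a n l₀) = (((leadPoly W a n l₀).eval (Y : ℤ) : ℤ) : ℝ) := by
    simpa using aeval_algebraMap_apply ℝ (Y : ℤ) (leadPoly W a n l₀)
  have hsum : leadPart W a n Y =
      ∑ l : Fin W, exp (-2 * π * Y) ^ (l : ℕ) * aeval (Y : ℝ) (leadPoly W a n l) := by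
    rw [leadPart_eq_sum]
    refine Finset.sum_congr rfl fun l _ => ?_
    rw [← exp_nat_mul]
    ring_nf
  rw [hsum]
  refine half_pow_le_abs_sum_pow_mul (exp_pos _).le
    (exp_le_one_iff.2 (by nlinarith [pi_pos, Nat.cast_nonneg (α := ℝ) Y])) (l₀ := l₀) ?_
    (fun l hl => by rw [hlt l hl, map_zero])
    (fun l => abs_aeval_leadPoly_le ha n l (by exact_mod_cast hY)) hsmall
  rw [hint]
  exact_mod_cast Int.one_le_abs hl₀

lemma abs_leadPart_le_on_grid (W : ℕ) (a : Fin W × Fin W × Fin W → ℤ) (n : ℕ) {h : ℝ} (hh : 0 ≤ h)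
    (y₀ : ℝ) {δ : ℝ} (hδ : 0 ≤ δ)
    (hb : ∀ m < W * (48 * W + 1), |leadPart W a n (y₀ + m * h)| ≤ δ) (m : ℕ) :
    |leadPart W a n (y₀ + m * h)| ≤ δ * (2 * ((m : ℝ) + 1)) ^ (W * (48 * W + 1)) := by
  have key := abs_expPoly_le_on_grid (Finset.univ : Finset (Fin W)) (fun l => 2 * π * (l : ℕ))
    (fun _ _ => by positivity) (d := 48 * W) (fun l => (leadPoly W a n l).map (algebraMap ℤ ℝ))
    (fun l _ => natDegree_map_le.trans (natDegree_leadPoly_le W a n l)) hh y₀ hδ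
    (Q := leadPart W a n) (fun y => by simp only [leadPart_eq_sum, neg_mul, eval_map_algebraMap])
  rw [Finset.card_fin] at key
  exact key hb m

end ZeroEstimate

section ZeroEstimateParameters

open Real Filter

lemma pow_le_exp_mul {x L : ℝ} (hx : 0 ≤ x) (h : x ≤ exp L) (n : ℕ) : x ^ n ≤ exp (n * L) :=
  (pow_le_pow_left₀ hx h n).trans_eq (exp_nat_mul L n).symm

lemma two_pow_le_exp (n : ℕ) : (2 : ℝ) ^ n ≤ exp n := by
  have h : (2 : ℝ) ≤ exp 1 := by linarith [exp_one_gt_d9]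
  simpa only [mul_one] using pow_le_exp_mul zero_le_two h n

lemma natCast_le_exp (s : ℕ) : (s : ℝ) ≤ exp s := by
  linarith [add_one_le_exp (s : ℝ)]

lemma natCast_pow_le_exp (s n : ℕ) : (s : ℝ) ^ n ≤ exp (n * s) :=
  pow_le_exp_mul s.cast_nonneg (natCast_le_exp s) n

lemma natCast_pow_four_pow_three_le_exp (s : ℕ) : ((s ^ 4 : ℕ) : ℝ) ^ 3 ≤ exp (12 * s) := by
  push_cast
  rw [← pow_mul]
  exact mod_cast natCast_pow_le_exp s 12

variable {s : ℕ}

lemma const_mul_pow_le_mul_pow (hs : 2000 ≤ s) (k : ℕ) : 2000 * (s : ℝ) ^ k ≤ s * s ^ k := by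
  gcongr
  exact_mod_cast hs

lemma one_div_mem_Icc_of_mem_Icc (hs : 2000 ≤ s) {y : ℝ}
    (hy : y ∈ Set.Icc (49 / (s : ℝ) ^ 12) (98 / (s : ℝ) ^ 12)) :
    0 < y ∧ y ≤ 1 ∧ (s : ℝ) ^ 12 / 98 ≤ 1 / y ∧ 1 / y ≤ s ^ 12 / 49 := by
  have : 0 < (s : ℝ) := by exact_mod_cast (by omega : 0 < s)
  have hy0 : 0 < y := lt_of_lt_of_le (by positivity) hy.1
  have hs12 : (2000 : ℝ) ≤ s ^ 12 :=
    (show (2000 : ℝ) ≤ s by exact_mod_cast hs).trans (le_self_pow₀ (by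
      exact_mod_cast (by omega : 1 ≤ s)) (by norm_num))
  refine ⟨hy0, hy.2.trans (by rw [div_le_one (by positivity)]; linarith), ?_, ?_⟩
  · rw [← one_div_div]
    exact one_div_le_one_div_of_le hy0 hy.2
  · rw [← one_div_div 49]
    exact one_div_le_one_div_of_le (by positivity) hy.1

lemma two_div_pow_le_exp (hs : 2000 ≤ s) {y : ℝ}
    (hy : y ∈ Set.Icc (49 / (s : ℝ) ^ 12) (98 / (s : ℝ) ^ 12)) :
    (2 / y) ^ (24 * s ^ 4) ≤ exp (288 * s ^ 5) := by
  obtain ⟨hy0, -, -, hinv⟩ := one_div_mem_Icc_of_mem_Icc hs hy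
  have h2y : 2 / y ≤ exp (12 * s) := by
    calc 2 / y = 2 * (1 / y) := by ring
      _ ≤ s ^ 12 := by linarith [pow_nonneg (s.cast_nonneg (α := ℝ)) 12]
      _ ≤ exp (12 * s) := mod_cast natCast_pow_le_exp s 12
  refine (pow_le_exp_mul (by positivity) h2y _).trans_eq ?_
  push_cast
  ring_nf

lemma dominated_term_le (hs : 2000 ≤ s) {C : ℝ} (hC0 : 0 ≤ C) (hC : C ≤ exp s) {n : ℕ}
    (hn : n ≤ 3 * s ^ 4) {y : ℝ} (hy : y ∈ Set.Icc (49 / (s : ℝ) ^ 12) (98 / (s : ℝ) ^ 12)) :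
    exp (2 * n * π / y) * (2 ^ (24 * s ^ 4) * (exp (-π * y * (s ^ 30 : ℕ)) * ((s ^ 4 : ℕ) ^ 3 *
      exp (s ^ 6) * (C ^ (4 * s ^ 4) * (2 / y) ^ (24 * s ^ 4))))) ≤ exp (-(s : ℝ) ^ 11) := by
  obtain ⟨hy0, -, -, hinv⟩ := one_div_mem_Icc_of_mem_Icc hs hy
  have hs0 : 0 < (s : ℝ) := by exact_mod_cast (by omega : 0 < s)
  have hnR : (n : ℝ) ≤ 3 * s ^ 4 := by exact_mod_cast hn
  have hlead : exp (2 * n * π / y) ≤ exp (s ^ 16) := by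
    rw [exp_le_exp]
    calc 2 * n * π / y = 2 * n * π * (1 / y) := by ring
      _ ≤ 2 * (3 * s ^ 4) * 4 * (s ^ 12 / 49) := by
          gcongr
          exact pi_le_four
      _ ≤ s ^ 16 := by linarith [pow_pos hs0 16]
  have hvanish : exp (-π * y * (s ^ 30 : ℕ)) ≤ exp (-(147 * s ^ 18)) := by
    have h49 : 49 * (s : ℝ) ^ 18 ≤ y * s ^ 30 := by
      calc 49 * (s : ℝ) ^ 18 = 49 / s ^ 12 * s ^ 30 := by field_simp
        _ ≤ y * s ^ 30 := by gcongr; exact hy.1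
    rw [exp_le_exp]
    push_cast
    nlinarith [pi_gt_three, mul_pos hy0 (pow_pos hs0 30)]
  calc exp (2 * n * π / y) * (2 ^ (24 * s ^ 4) * (exp (-π * y * (s ^ 30 : ℕ)) * ((s ^ 4 : ℕ) ^ 3 *
      exp (s ^ 6) * (C ^ (4 * s ^ 4) * (2 / y) ^ (24 * s ^ 4)))))
      ≤ exp (s ^ 16) * (exp (24 * s ^ 4 : ℕ) * (exp (-(147 * s ^ 18)) * (exp (12 * s) *
        exp (s ^ 6) * (exp ((4 * s ^ 4 : ℕ) * s) * exp (288 * s ^ 5))))) := by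
        gcongr
        exacts [two_pow_le_exp _, natCast_pow_four_pow_three_le_exp s, pow_le_exp_mul hC0 hC _,
          two_div_pow_le_exp hs hy]
    _ = exp (s ^ 16 + (24 * s ^ 4 + (-(147 * s ^ 18) + (12 * s + s ^ 6 +
        (4 * s ^ 4 * s + 288 * s ^ 5))))) := by
        push_cast
        simp only [exp_add]
    _ ≤ exp (-(s : ℝ) ^ 11) := by
        rw [exp_le_exp]
        have h := const_mul_pow_le_mul_pow hs
        linarith [h 17, h 16, h 15, h 14, h 13, h 12, h 11, h 10, h 9, h 8, h 7, h 6, h 5, h 4, h 3,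
          h 2, h 1]

lemma error_term_le (hs : 2000 ≤ s) {y : ℝ}
    (hy : y ∈ Set.Icc (49 / (s : ℝ) ^ 12) (98 / (s : ℝ) ^ 12)) :
    (s ^ 4 : ℕ) ^ 3 * (exp (s ^ 6) * 2 ^ (24 * s ^ 4) * (192 * (s ^ 4 : ℕ) * exp (-π / y))) ≤
      exp (-(s : ℝ) ^ 11) := by
  obtain ⟨hy0, -, hinv, -⟩ := one_div_mem_Icc_of_mem_Icc hs hy
  have hdecay : exp (-π / y) ≤ exp (-(s ^ 12 / 98)) := by
    rw [exp_le_exp, neg_div, neg_le_neg_iff]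
    exact hinv.trans (by gcongr; linarith [pi_gt_three])
  have hW : 192 * ((s ^ 4 : ℕ) : ℝ) ≤ exp (5 * s) := by
    push_cast
    have h4 := const_mul_pow_le_mul_pow hs 4
    have h5 : (s : ℝ) ^ 5 ≤ exp (5 * s) := mod_cast natCast_pow_le_exp s 5
    linarith [pow_nonneg (s.cast_nonneg (α := ℝ)) 4]
  calc (s ^ 4 : ℕ) ^ 3 * (exp (s ^ 6) * 2 ^ (24 * s ^ 4) * (192 * (s ^ 4 : ℕ) * exp (-π / y)))
      ≤ exp (12 * s) * (exp (s ^ 6) * exp (24 * s ^ 4 : ℕ) *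
        (exp (5 * s) * exp (-(s ^ 12 / 98)))) := by
        gcongr
        exacts [natCast_pow_four_pow_three_le_exp s, two_pow_le_exp _]
    _ = exp (12 * s + (s ^ 6 + 24 * s ^ 4 + (5 * s + -(s ^ 12 / 98)))) := by
        push_cast
        simp only [exp_add]
    _ ≤ exp (-(s : ℝ) ^ 11) := by
        rw [exp_le_exp]
        have h := const_mul_pow_le_mul_pow hs
        linarith [h 11, h 10, h 9, h 8, h 7, h 6, h 5, h 4, h 3, h 2, h 1]

lemma exp_mul_leadPoly_bound_le_half (hs : 2000 ≤ s) {Y : ℕ} (hY : s ^ 6 ≤ Y)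
    (hY' : Y ≤ 49 * s ^ 6) :
    exp (-2 * π * Y) * ((s ^ 4 : ℕ) * ((s ^ 4 : ℕ) ^ 2 * (exp (s ^ 6) * 2 ^ (24 * s ^ 4) *
      (Y : ℝ) ^ (48 * s ^ 4)))) ≤ 1 / 2 := by
  have hYR : (s : ℝ) ^ 6 ≤ Y := by exact_mod_cast hY
  have hdecay : exp (-2 * π * Y) ≤ exp (-(6 * s ^ 6)) := by
    rw [exp_le_exp]
    nlinarith [pi_gt_three, Nat.cast_nonneg (α := ℝ) Y]
  have hW : ((s ^ 4 : ℕ) : ℝ) ≤ exp (4 * s) := mod_cast natCast_pow_le_exp s 4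
  have hW2 : ((s ^ 4 : ℕ) : ℝ) ^ 2 ≤ exp (8 * s) := by
    push_cast
    rw [← pow_mul]
    exact mod_cast natCast_pow_le_exp s 8
  have hYexp : (Y : ℝ) ≤ exp (7 * s) := by
    have h7 : (s : ℝ) ^ 7 ≤ exp (7 * s) := mod_cast natCast_pow_le_exp s 7
    have hYR' : (Y : ℝ) ≤ 49 * s ^ 6 := by exact_mod_cast hY'
    linarith [const_mul_pow_le_mul_pow hs 6, pow_nonneg (s.cast_nonneg (α := ℝ)) 6]
  calc exp (-2 * π * Y) * ((s ^ 4 : ℕ) * ((s ^ 4 : ℕ) ^ 2 * (exp (s ^ 6) * 2 ^ (24 * s ^ 4) *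
        (Y : ℝ) ^ (48 * s ^ 4))))
      ≤ exp (-(6 * s ^ 6)) * (exp (4 * s) * (exp (8 * s) * (exp (s ^ 6) * exp (24 * s ^ 4 : ℕ) *
        exp ((48 * s ^ 4 : ℕ) * (7 * s))))) := by
        gcongr
        exacts [two_pow_le_exp _, pow_le_exp_mul Y.cast_nonneg hYexp _]
    _ = exp (-(6 * s ^ 6) + (4 * s + (8 * s + (s ^ 6 + 24 * s ^ 4 + 48 * s ^ 4 * (7 * s))))) := by
        push_cast
        simp only [exp_add]
    _ ≤ exp (-1) := by
        rw [exp_le_exp]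
        have h := const_mul_pow_le_mul_pow hs
        have h0 : 2000 ≤ (s : ℝ) := by exact_mod_cast hs
        linarith [h 5, h 4, h 3, h 2, h 1]
    _ ≤ 1 / 2 := by linarith [exp_neg_one_lt_d9]

lemma exists_exp_le_abs_leadPart (hs : 2000 ≤ s)
    {a : Fin (s ^ 4) × Fin (s ^ 4) × Fin (s ^ 4) → ℤ} (ha : ∀ t, |(a t : ℝ)| ≤ exp (s ^ 6)) {n : ℕ}
    {l₀ : Fin (s ^ 4)} (hl₀ : leadPoly _ a n l₀ ≠ 0) (hlt : ∀ l < l₀, leadPoly _ a n l = 0) :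
    ∃ Y : ℕ, s ^ 6 ≤ Y ∧ Y ≤ 49 * s ^ 6 ∧
      1 / 2 * exp (-(392 * s ^ 10)) ≤ |leadPart _ a n Y| := by
  obtain ⟨Y, hY, hroot⟩ := exists_eval_natCast_ne_zero hl₀ (natDegree_leadPoly_le _ a n l₀) (s ^ 6)
  obtain ⟨hY1, hY2⟩ := Finset.mem_Icc.1 hY
  have hY3 : Y ≤ 49 * s ^ 6 := by
    have : s ^ 4 ≤ s ^ 6 := Nat.pow_le_pow_right (by omega) (by norm_num)
    omega
  have hY4 : (Y : ℝ) ≤ 49 * s ^ 6 := by exact_mod_cast hY3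
  refine ⟨Y, hY1, hY3, le_trans ?_ (half_exp_le_abs_leadPart ha
    ((Nat.one_le_pow _ _ (by omega)).trans hY1) hroot hlt
    (exp_mul_leadPoly_bound_le_half hs hY1 hY3))⟩
  rw [← exp_nat_mul]
  gcongr
  calc -(392 * (s : ℝ) ^ 10) = -(s ^ 4 * (2 * 4 * (49 * s ^ 6))) := by ring
    _ ≤ -(s ^ 4 * (2 * π * Y)) := by
        gcongr
        exact pi_le_four
    _ = (s ^ 4 : ℕ) * (-2 * π * Y) := by
        push_cast
        ring

lemma grid_card_le (hs : 2000 ≤ s) : ((s ^ 4 * (48 * s ^ 4 + 1) : ℕ) : ℝ) ≤ 49 * s ^ 8 := by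
  have hpow := const_mul_pow_le_mul_pow hs
  push_cast
  linarith [hpow 7, hpow 6, hpow 5, hpow 4, pow_nonneg (s.cast_nonneg (α := ℝ)) 4]

lemma grid_mem_Icc (hs : 2000 ≤ s) {m : ℕ} (hm : m < s ^ 4 * (48 * s ^ 4 + 1)) :
    49 / (s : ℝ) ^ 12 + m * (1 / s ^ 20) ∈ Set.Icc (49 / (s : ℝ) ^ 12) (98 / (s : ℝ) ^ 12) := by
  have : 0 < (s : ℝ) := by exact_mod_cast (by omega : 0 < s)
  have hm' : (m : ℝ) ≤ 49 * s ^ 8 := (by exact_mod_cast hm.le : (m : ℝ) ≤ _).trans (grid_card_le hs)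
  refine ⟨le_add_of_nonneg_right (by positivity), ?_⟩
  calc 49 / (s : ℝ) ^ 12 + m * (1 / s ^ 20) ≤ 49 / (s : ℝ) ^ 12 + 49 * s ^ 8 * (1 / s ^ 20) := by
        gcongr
    _ = 98 / (s : ℝ) ^ 12 := by
        field_simp
        norm_num

/-- The integer `Y` lies on the grid of step `1 / s²⁰` which starts at `49 / s¹²`. -/
lemma abs_leadPart_natCast_le (hs : 2000 ≤ s) (a : Fin (s ^ 4) × Fin (s ^ 4) × Fin (s ^ 4) → ℤ)
    {n : ℕ} {δ : ℝ} (hδ : 0 ≤ δ)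
    (hb : ∀ y ∈ Set.Icc (49 / (s : ℝ) ^ 12) (98 / (s : ℝ) ^ 12), |leadPart _ a n y| ≤ δ) {Y : ℕ}
    (hY : s ^ 6 ≤ Y) (hY' : Y ≤ 49 * s ^ 6) :
    |leadPart _ a n Y| ≤ δ * exp (1323 * s ^ 9) := by
  have hs0 : 0 < (s : ℝ) := by exact_mod_cast (by omega : 0 < s)
  have hpow := const_mul_pow_le_mul_pow hs
  have hle : 49 * s ^ 8 ≤ s ^ 20 * Y := by
    calc 49 * s ^ 8 ≤ s * s ^ 8 := Nat.mul_le_mul_right _ (by omega)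
      _ = s ^ 9 * 1 := by ring
      _ ≤ s ^ 20 * Y := Nat.mul_le_mul (Nat.pow_le_pow_right (by omega) (by norm_num))
          ((Nat.one_le_pow _ _ (by omega)).trans hY)
  obtain ⟨m, hm⟩ := Nat.exists_eq_add_of_le hle
  have hmR : (s : ℝ) ^ 20 * Y = 49 * s ^ 8 + m := by exact_mod_cast hm
  have hYgrid : 49 / (s : ℝ) ^ 12 + m * (1 / s ^ 20) = Y := by
    field_simp
    linear_combination -hmR
  have hbase : 2 * ((m : ℝ) + 1) ≤ exp (27 * s) := by
    have hY'R : (s : ℝ) ^ 20 * Y ≤ s ^ 20 * (49 * s ^ 6) := by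
      gcongr
      exact_mod_cast hY'
    have h27 : (s : ℝ) ^ 27 ≤ exp (27 * s) := mod_cast natCast_pow_le_exp s 27
    have hs26 : 1 ≤ (s : ℝ) ^ 26 := one_le_pow₀ (by exact_mod_cast (by omega : 1 ≤ s))
    linarith [hpow 26, pow_pos hs0 8]
  calc |leadPart _ a n Y| ≤ δ * (2 * ((m : ℝ) + 1)) ^ (s ^ 4 * (48 * s ^ 4 + 1)) :=
        hYgrid ▸ abs_leadPart_le_on_grid _ a n (by positivity) _ hδ
          (fun _ hm => hb _ (grid_mem_Icc hs hm)) m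
    _ ≤ δ * exp ((s ^ 4 * (48 * s ^ 4 + 1) : ℕ) * (27 * s)) := by
        gcongr
        exact pow_le_exp_mul (by positivity) hbase _
    _ ≤ δ * exp (49 * s ^ 8 * (27 * s)) := by
        gcongr
        exact grid_card_le hs
    _ = δ * exp (1323 * s ^ 9) := by ring_nf

lemma exists_coeff_auxFun_ne_zero (C₁ : ℝ) : ∀ᶠ s : ℕ in atTop,
    ∀ a : Fin (s ^ 4) × Fin (s ^ 4) × Fin (s ^ 4) → ℤ, a ≠ 0 →
      (∀ t, |(a t : ℝ)| ≤ exp (C₁ * s ^ 5)) → ∀ α : ℕ → ℂ, HasDiscSeries α (auxFun (s ^ 4) a) →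
        ∃ n < s ^ 30, α n ≠ 0 := by
  obtain ⟨C, hC, hbound⟩ := exists_norm_auxFun_exp_le
  filter_upwards [eventually_ge_atTop 2000,
    tendsto_natCast_atTop_atTop.eventually_ge_atTop C₁,
    (tendsto_exp_atTop.comp tendsto_natCast_atTop_atTop).eventually_ge_atTop C]
    with s hs hC₁s hCs a ha hab α hα
  by_contra! hzero
  have ha6 : ∀ t, |(a t : ℝ)| ≤ exp (s ^ 6) := fun t => (hab t).trans <| exp_le_exp.2 <|
    (mul_le_mul_of_nonneg_right hC₁s (by positivity)).trans_eq (by ring)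
  obtain ⟨n, hn, hnmin, l₀, hl₀, hl₀min⟩ := exists_min_level ha
  have hsmall : ∀ y ∈ Set.Icc (49 / (s : ℝ) ^ 12) (98 / (s : ℝ) ^ 12),
      |leadPart _ a n y| ≤ 2 * exp (-s ^ 11) := by
    intro y hy
    obtain ⟨hy0, hy1, -⟩ := one_div_mem_Icc_of_mem_Icc hs hy
    rw [two_mul]
    refine (abs_leadPart_le ha6 hnmin hy0 hy1).trans (add_le_add
      (le_trans ?_ (dominated_term_le hs (zero_le_one.trans hC) hCs hn hy)) (error_term_le hs hy))
    gcongr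
    exact hbound _ a _ ha6 α _ hα hzero y hy0 hy1
  obtain ⟨Y, hY, hY', hlower⟩ := exists_exp_le_abs_leadPart hs ha6 hl₀ hl₀min
  have hupper := abs_leadPart_natCast_le hs a (by positivity) hsmall hY hY'
  have hexp : exp (-(392 * s ^ 10)) ≤ exp (2 + -s ^ 11 + 1323 * s ^ 9) := by
    have h4 : 4 ≤ exp 2 := by
      rw [show (2 : ℝ) = 1 + 1 by norm_num, exp_add]
      nlinarith [exp_one_gt_d9]
    calc exp (-(392 * (s : ℝ) ^ 10)) ≤ 4 * exp (-s ^ 11) * exp (1323 * s ^ 9) := by linarith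
      _ ≤ exp 2 * exp (-s ^ 11) * exp (1323 * s ^ 9) := by gcongr
      _ = exp (2 + -s ^ 11 + 1323 * s ^ 9) := by rw [exp_add, exp_add]
  have hpow := const_mul_pow_le_mul_pow hs
  have hs9 : 1 ≤ (s : ℝ) ^ 9 := one_le_pow₀ (by exact_mod_cast (by omega : 1 ≤ s))
  linarith [exp_le_exp.1 hexp, hpow 9, hpow 10]

end ZeroEstimateParameters

section PrimeWindow

open Real

lemma two_mul_pow_lt_primeCounting {t : ℕ} (ht : 200 ≤ t) :
    2 * t ^ 22 < Nat.primeCounting (t ^ 24) := by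
  have htR : (200 : ℝ) ≤ t := by exact_mod_cast ht
  have ht0 : 0 < (t : ℝ) := by linarith
  have hpow : ∀ k : ℕ, 200 * (t : ℝ) ^ k ≤ t * t ^ k := fun k => by gcongr
  have hlogt : log t ≤ t := log_le_self ht0.le
  have hlog : log ((t ^ 24 : ℕ) : ℝ) ≤ 24 * t := by
    push_cast
    rw [log_pow]
    push_cast
    linarith
  have hlog' : log (((t ^ 24 : ℕ) : ℝ) + 1) ≤ 25 * t := by
    have hle : ((t ^ 24 : ℕ) : ℝ) + 1 ≤ t ^ 25 := by
      push_cast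
      linarith [hpow 24, one_le_pow₀ (n := 24) (by linarith : 1 ≤ (t : ℝ))]
    refine (log_le_log (by positivity) hle).trans ?_
    rw [log_pow]
    push_cast
    linarith
  have hlog2 : (1 / 2 : ℝ) * t ^ 24 ≤ ((t ^ 24 : ℕ) : ℝ) * log 2 := by
    push_cast
    rw [mul_comm]
    gcongr
    linarith [log_two_gt_d9]
  have hChebyshev :=
    (Chebyshev.psi_ge (t ^ 24)).trans (Chebyshev.psi_le_primeCounting_mul_log (t ^ 24))
  by_contra! hcon
  have hcon' : (Nat.primeCounting (t ^ 24) : ℝ) ≤ 2 * t ^ 22 := by exact_mod_cast hcon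
  have hupper : (Nat.primeCounting (t ^ 24) : ℝ) * log ((t ^ 24 : ℕ) : ℝ) ≤
      2 * t ^ 22 * (24 * t) :=
    mul_le_mul hcon' hlog (log_natCast_nonneg _) (by positivity)
  linarith [hpow 23, hpow 1, le_self_pow₀ (by linarith : 1 ≤ (t : ℝ)) (show 23 ≠ 0 by norm_num),
    pow_pos ht0 23]

/-- The primes in `(t ^ 22, t ^ 24]`. With `s = t ^ 8` they are at most `s ^ 3`, and their sum
exceeds the exponents of order `s ^ 5` in the bounds for the auxiliary function. -/
def primeWindow (t : ℕ) : Finset ℕ := {p ∈ Finset.Ioc (t ^ 22) (t ^ 24) | p.Prime}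

lemma mem_primeWindow {t p : ℕ} :
    p ∈ primeWindow t ↔ (t ^ 22 < p ∧ p ≤ t ^ 24) ∧ p.Prime := by
  rw [primeWindow, Finset.mem_filter, Finset.mem_Ioc]

lemma card_primeWindow_le (t : ℕ) : (primeWindow t).card ≤ t ^ 24 := by
  refine (Finset.card_filter_le _ _).trans ?_
  rw [Nat.card_Ioc]
  exact Nat.sub_le _ _

lemma pow_le_card_primeWindow {t : ℕ} (ht : 200 ≤ t) : t ^ 22 ≤ (primeWindow t).card := by
  have hsub : Nat.primesLE (t ^ 24) ⊆ Finset.Ioc 0 (t ^ 22) ∪ primeWindow t := by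
    intro p hp
    rw [Nat.mem_primesLE] at hp
    rw [Finset.mem_union, Finset.mem_Ioc, mem_primeWindow]
    rcases le_or_gt p (t ^ 22) with h | h
    · exact Or.inl ⟨hp.2.pos, h⟩
    · exact Or.inr ⟨⟨h, hp.1⟩, hp.2⟩
  have hcard := (Finset.card_le_card hsub).trans (Finset.card_union_le _ _)
  rw [Nat.primesLE_card_eq_primeCounting, Nat.card_Ioc] at hcard
  have := two_mul_pow_lt_primeCounting ht
  omega

lemma pow_le_sum_primeWindow {t : ℕ} (ht : 200 ≤ t) : t ^ 44 ≤ ∑ p ∈ primeWindow t, p := by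
  calc t ^ 44 = t ^ 22 * t ^ 22 := by ring
    _ ≤ (primeWindow t).card * t ^ 22 := Nat.mul_le_mul_right _ (pow_le_card_primeWindow ht)
    _ ≤ ∑ p ∈ primeWindow t, p := by
        rw [← smul_eq_mul]
        exact Finset.card_nsmul_le_sum _ _ _ fun p hp => (mem_primeWindow.1 hp).1.1.le

lemma prod_primeWindow_pow_le {x : ℝ} (hx0 : 0 ≤ x) (hx1 : x ≤ 1) {t : ℕ} (ht : 200 ≤ t) :
    ∏ p ∈ primeWindow t, x ^ p ≤ x ^ t ^ 44 := by
  rw [Finset.prod_pow_eq_pow_sum]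
  exact pow_le_pow_of_le_one hx0 hx1 (pow_le_sum_primeWindow ht)

end PrimeWindow

section TranscendenceOfDiscQuot

open Real Filter

lemma one_le_of_auxFun_eq_zero {C A : ℝ}
    (hC : ∀ (W : ℕ) (a : Fin W × Fin W × Fin W → ℤ) (A : ℝ), (∀ t, |(a t : ℝ)| ≤ A) →
      ∀ z : ℂ, ‖z‖ < 1 →
        ‖auxFun W a z‖ ≤ W ^ 3 * A * (C ^ (4 * W) * (1 / (1 - ‖z‖)) ^ (24 * W)))
    {W : ℕ} {a : Fin W × Fin W × Fin W → ℤ} (ha : ∀ t, |(a t : ℝ)| ≤ A) (hA : 0 ≤ A)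
    (hC0 : 0 ≤ C) {N : ℕ}
    (hN : ∀ α : ℕ → ℂ, HasDiscSeries α (auxFun W a) → ∃ n < N, α n ≠ 0) (S : Finset ℂ)
    (hS : ∀ x ∈ S, x ≠ 0 ∧ ‖x‖ ≤ 1 / 4) (h0 : ∀ x ∈ S, auxFun W a x = 0) :
    1 ≤ 4 * (W ^ 3 * A * C ^ (4 * W)) * ((N : ℝ) + 2) ^ (24 * W) * 4 ^ S.card *
      ∏ x ∈ S, ‖x‖ := by
  classical
  obtain ⟨α, hα⟩ := hasIntDiscSeries_auxFun W a
  have hex : ∃ n < N, α n ≠ 0 := by simpa only [ne_eq, Int.cast_eq_zero] using hN _ hα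
  obtain ⟨hMN, hM⟩ := Nat.find_spec hex
  have hlead := hα.norm_leadingCoeff_le_of_zeros (A := W ^ 3 * A * C ^ (4 * W)) (n := 24 * W)
    (M := Nat.find hex) (fun z hz => (hC W a A ha z hz).trans_eq (by ring))
    (fun n hn => by
      simpa only [hn.trans hMN, true_and, not_not, Int.cast_eq_zero] using Nat.find_min hex hn)
    S hS h0
  rw [Complex.norm_intCast] at hlead
  calc (1 : ℝ) ≤ |(α (Nat.find hex) : ℝ)| := by exact_mod_cast Int.one_le_abs hM
    _ ≤ _ := hlead
    _ ≤ _ := by gcongr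

lemma auxFun_bound_le_exp {t : ℕ} (ht : 10000 ≤ t) {C C₁ : ℝ} (hC0 : 0 ≤ C) (hC : C ≤ exp t)
    (hC₁ : C₁ ≤ t) {k : ℕ} (hk : k ≤ t ^ 24) :
    4 * (((t ^ 8) ^ 4 : ℕ) ^ 3 * exp (C₁ * (t ^ 8 : ℕ) ^ 5) * C ^ (4 * (t ^ 8) ^ 4)) *
      (((t ^ 8) ^ 30 : ℕ) + 2) ^ (24 * (t ^ 8) ^ 4) * 4 ^ k ≤ exp ((t : ℝ) ^ 42) := by
  have hW : (((t ^ 8) ^ 4 : ℕ) : ℝ) ^ 3 ≤ exp (96 * t) := by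
    push_cast
    rw [← pow_mul, ← pow_mul]
    exact mod_cast natCast_pow_le_exp t 96
  have hSiegel : exp (C₁ * (t ^ 8 : ℕ) ^ 5) ≤ exp ((t : ℝ) ^ 41) := by
    rw [exp_le_exp]
    push_cast
    calc C₁ * ((t : ℝ) ^ 8) ^ 5 ≤ t * ((t : ℝ) ^ 8) ^ 5 := by gcongr
      _ = (t : ℝ) ^ 41 := by ring
  have hpow : ∀ k : ℕ, 10000 * (t : ℝ) ^ k ≤ t * t ^ k := fun k => by
    gcongr
    exact_mod_cast ht
  have hone : ∀ k : ℕ, 1 ≤ (t : ℝ) ^ k := fun k =>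
    one_le_pow₀ (by exact_mod_cast (by omega : 1 ≤ t))
  have hN : ((t ^ 8) ^ 30 : ℕ) + 2 ≤ exp (241 * t) := by
    have h241 : (t : ℝ) ^ 241 ≤ exp (241 * t) := mod_cast natCast_pow_le_exp t 241
    push_cast
    rw [← pow_mul, show 8 * 30 = 240 from rfl]
    linarith [hpow 240, hone 240]
  have hfour : (4 : ℝ) ≤ exp 2 := by
    simpa only [show (2 : ℝ) ^ 2 = 4 by norm_num, Nat.cast_ofNat] using two_pow_le_exp 2
  have hcard : (4 : ℝ) ^ k ≤ exp ((t ^ 24 : ℕ) * 2) :=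
    (pow_le_pow_right₀ (by norm_num) hk).trans (pow_le_exp_mul (by norm_num) hfour _)
  calc 4 * (((t ^ 8) ^ 4 : ℕ) ^ 3 * exp (C₁ * (t ^ 8 : ℕ) ^ 5) * C ^ (4 * (t ^ 8) ^ 4)) *
        (((t ^ 8) ^ 30 : ℕ) + 2) ^ (24 * (t ^ 8) ^ 4) * 4 ^ k
      ≤ exp 2 * (exp (96 * t) * exp ((t : ℝ) ^ 41) * exp ((4 * (t ^ 8) ^ 4 : ℕ) * t)) *
        exp ((24 * (t ^ 8) ^ 4 : ℕ) * (241 * t)) * exp ((t ^ 24 : ℕ) * 2) := by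
        gcongr
        exacts [pow_le_exp_mul hC0 hC _, pow_le_exp_mul (by positivity) hN _]
    _ = exp (2 + (96 * t + t ^ 41 + 4 * t ^ 32 * t) + 24 * t ^ 32 * (241 * t) + t ^ 24 * 2) := by
        push_cast
        simp only [exp_add, ← pow_mul, Nat.reduceMul]
    _ ≤ exp ((t : ℝ) ^ 42) := by
        rw [exp_le_exp]
        have hmono : ∀ k ≤ 41, (t : ℝ) ^ k ≤ t ^ 41 := fun k hk =>
          pow_le_pow_right₀ (by simpa only [pow_one] using hone 1) hk
        linarith [hpow 41, hone 41, hmono 1 (by norm_num), hmono 33 (by norm_num),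
          hmono 24 (by norm_num)]

lemma exp_mul_pow_lt_one {r : ℝ} (hr : 0 < r) {t : ℕ} (ht : 1 ≤ t) (hlog : 1 < t * -log r) :
    exp ((t : ℝ) ^ 42) * r ^ t ^ 44 < 1 := by
  have ht1 : 1 ≤ (t : ℝ) := by exact_mod_cast ht
  have hpow : r ^ t ^ 44 = exp ((t : ℝ) ^ 44 * log r) := by
    rw [← Nat.cast_pow, exp_nat_mul, exp_log hr]
  rw [hpow, ← exp_add, exp_lt_one_iff]
  have h43 : (t : ℝ) ^ 43 * 1 < t ^ 43 * (t * -log r) := by gcongr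
  have h42 : (t : ℝ) ^ 42 ≤ t ^ 43 := pow_le_pow_right₀ ht1 (by norm_num)
  linear_combination h43 + h42

theorem transcendental_discQuot {x : ℂ} (hint : IsIntegral ℤ x) (hx0 : x ≠ 0) (hx : ‖x‖ < 1) :
    Transcendental ℚ (discQuot x) := by
  classical
  intro halg
  obtain ⟨C₁, -, hSiegel⟩ := exists_auxFun_eq_zero hint hx0 hx halg
  obtain ⟨C, hC, hgrowth⟩ := exists_norm_auxFun_le
  have hx0' : 0 < ‖x‖ := norm_pos_iff.2 hx0
  have hlog : 0 < -log ‖x‖ := neg_pos.2 (log_neg hx0' hx)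
  have hcast := tendsto_natCast_atTop_atTop (R := ℝ)
  have hpow8 : Tendsto (fun t : ℕ => t ^ 8) atTop atTop := tendsto_pow_atTop (by norm_num)
  have hsmall : ∀ᶠ t : ℕ in atTop, ‖x‖ ^ t ≤ 1 / 4 :=
    (tendsto_pow_atTop_nhds_zero_of_lt_one hx0'.le hx).eventually_le_const (by norm_num)
  obtain ⟨t, ht, hC₁t, hCt, hlogt, hxt, hSt, hZt⟩ := ((eventually_ge_atTop 10000).and <|
    (hcast.eventually_ge_atTop C₁).and <|
    ((tendsto_exp_atTop.comp hcast).eventually_ge_atTop C).and <|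
    (hcast.eventually_gt_atTop (-log ‖x‖)⁻¹).and <| hsmall.and <|
    (hpow8.eventually hSiegel).and (hpow8.eventually (exists_coeff_auxFun_ne_zero C₁))).exists
  obtain ⟨a, ha0, hab, hzeros⟩ := hSt
  have hinj : Function.Injective (fun p : ℕ => x ^ p) := fun m n h =>
    pow_right_injective₀ hx0' hx.ne (by simpa only [norm_pow] using congrArg norm h)
  have hwindow : ∀ p ∈ primeWindow t, t ≤ p := fun p hp =>
    (Nat.le_self_pow (by norm_num) t).trans (mem_primeWindow.1 hp).1.1.le
  have hone := one_le_of_auxFun_eq_zero hgrowth hab (exp_nonneg _) (zero_le_one.trans hC)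
    (hZt a ha0 hab) ((primeWindow t).image (fun p => x ^ p))
    (Finset.forall_mem_image.2 fun p hp => ⟨pow_ne_zero p hx0, by
      rw [norm_pow]
      exact (pow_le_pow_of_le_one hx0'.le hx.le (hwindow p hp)).trans hxt⟩)
    (Finset.forall_mem_image.2 fun p hp => hzeros p (mem_primeWindow.1 hp).2
      (by have := hwindow p hp; omega) (by rw [← pow_mul]; exact (mem_primeWindow.1 hp).1.2))
  rw [Finset.card_image_of_injective _ hinj, Finset.prod_image hinj.injOn] at hone
  simp only [norm_pow] at hone
  refine absurd (hone.trans ?_) (exp_mul_pow_lt_one hx0' (by omega)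
    ((inv_lt_iff_one_lt_mul₀ hlog).1 hlogt)).not_ge
  exact mul_le_mul (auxFun_bound_le_exp ht (zero_le_one.trans hC) hCt hC₁t (card_primeWindow_le t))
    (prod_primeWindow_pow_le hx0'.le hx.le (by omega)) (Finset.prod_nonneg fun p _ => by positivity)
    (exp_nonneg _)

end TranscendenceOfDiscQuot

/-! ### The Fibonacci product as a value of modular functions -/

section FibonacciProduct

open Filter Topology
open scoped goldenRatio

lemma tendsto_prod_one_sub_pow {z : ℂ} (hz : ‖z‖ < 1) :
    Tendsto (fun n => ∏ i ∈ Finset.range n, (1 - z ^ (i + 1))) atTop (𝓝 (eulerProd z)) :=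
  (ModularForm.multipliable_one_sub_pow hz).hasProd.tendsto_prod_nat

lemma prod_one_add_pow_odd_mul {R : Type*} [CommRing R] (z : R) (n : ℕ) :
    (∏ i ∈ Finset.range n, (1 + z ^ (2 * i + 1))) *
        ((∏ i ∈ Finset.range (2 * n), (1 - z ^ (i + 1))) *
          ∏ i ∈ Finset.range n, (1 - (z ^ 4) ^ (i + 1))) =
      (∏ i ∈ Finset.range (2 * n), (1 - (z ^ 2) ^ (i + 1))) *
        ∏ i ∈ Finset.range n, (1 - (z ^ 2) ^ (i + 1)) := by
  induction n with
  | zero => simp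
  | succ n ih =>
    rw [mul_add_one]
    simp only [Finset.prod_range_succ]
    linear_combination (1 + z ^ (2 * n + 1)) * (1 - z ^ (2 * n + 1)) * (1 - z ^ (2 * n + 2)) *
      (1 - (z ^ 4) ^ (n + 1)) * ih

lemma tendsto_prod_one_add_pow_odd {z : ℂ} (hz : ‖z‖ < 1) :
    Tendsto (fun n => ∏ i ∈ Finset.range n, (1 + z ^ (2 * i + 1))) atTop
      (𝓝 (eulerProd (z ^ 2) ^ 2 / (eulerProd z * eulerProd (z ^ 4)))) := by
  have hdouble : Tendsto (fun n : ℕ => 2 * n) atTop atTop := tendsto_id.const_mul_atTop' two_pos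
  have hlim {d : ℕ} (hd : d ≠ 0) := tendsto_prod_one_sub_pow (norm_pow_lt_one hz hd)
  rw [sq]
  refine ((((hlim two_ne_zero).comp hdouble).mul (hlim two_ne_zero)).div
    (((tendsto_prod_one_sub_pow hz).comp hdouble).mul (hlim four_ne_zero))
    (mul_ne_zero (eulerProd_ne_zero hz) (eulerProd_ne_zero
      (norm_pow_lt_one hz four_ne_zero)))).congr fun n => ?_
  refine (eq_div_of_mul_eq (mul_ne_zero ?_ ?_) (prod_one_add_pow_odd_mul z n)).symm
  · exact Finset.prod_ne_zero_iff.2 fun i _ => one_sub_pow_ne_zero hz i.succ_ne_zero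
  · exact Finset.prod_ne_zero_iff.2 fun i _ =>
      one_sub_pow_ne_zero (norm_pow_lt_one hz four_ne_zero) i.succ_ne_zero

lemma F_eq_fib (n : ℕ) : F n = Nat.fib (n + 1) := by
  induction n using Nat.twoStepInduction with
  | zero => rfl
  | one => rfl
  | more n ih ih' => rw [F, ih, ih', Nat.fib_add_two (n := n + 1), add_comm]

lemma β_eq_neg_goldenConj : β = -ψ := by
  rw [β, Real.goldenConj]
  ring

lemma β_eq_inv_goldenRatio : β = φ⁻¹ := by rw [β_eq_neg_goldenConj, Real.inv_goldenRatio]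

lemma β_pos : 0 < β := by
  rw [β_eq_neg_goldenConj]
  exact neg_pos.2 Real.goldenConj_neg

lemma β_lt_one : β < 1 := by
  rw [β_eq_neg_goldenConj]
  exact neg_lt.1 Real.neg_one_lt_goldenConj

lemma β_sq : β ^ 2 = 1 - β := by
  rw [β_eq_neg_goldenConj, neg_sq, Real.goldenConj_sq]
  ring

lemma β_pow_lt_one {n : ℕ} (hn : n ≠ 0) : β ^ n < 1 := pow_lt_one₀ β_pos.le β_lt_one hn

lemma one_div_fib (n : ℕ) :
    1 / (Nat.fib n : ℝ) = (2 * β + 1) * β ^ n / (1 - (-1) ^ n * β ^ (2 * n)) := by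
  have hsqrt : √5 = 2 * β + 1 := by
    rw [β]
    ring
  have hφ : φ = β⁻¹ := by rw [β_eq_inv_goldenRatio, inv_inv]
  have hψ : ψ = -β := by rw [β_eq_neg_goldenConj, neg_neg]
  have hβ := (pow_pos β_pos n).ne'
  rw [Real.coe_fib_eq, one_div_div, hsqrt, hφ, hψ, inv_pow, neg_pow, ← mul_div_mul_right _ _ hβ]
  congr 1
  rw [sub_mul, inv_mul_cancel₀ hβ]
  ring

/-- The algebraic point `q = β ^ 2` at which the modular functions are evaluated. -/
def goldenNome : ℝ := β ^ 2

lemma goldenNome_pos : 0 < goldenNome := pow_pos β_pos 2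

lemma goldenNome_lt_one : goldenNome < 1 := β_pow_lt_one two_ne_zero

lemma norm_goldenNome_lt_one : ‖(goldenNome : ℂ)‖ < 1 := by
  rw [Complex.norm_real, Real.norm_of_nonneg goldenNome_pos.le]
  exact goldenNome_lt_one

lemma isIntegral_goldenNome : IsIntegral ℤ (goldenNome : ℂ) := by
  refine ⟨Polynomial.X ^ 2 - 3 * Polynomial.X + 1, by monicity!, ?_⟩
  have hroot : goldenNome ^ 2 - 3 * goldenNome + 1 = 0 := by
    rw [goldenNome, β_sq]
    linear_combination β_sq
  simpa [Polynomial.eval₂_add, Polynomial.eval₂_sub, Polynomial.eval₂_mul] using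
    congrArg Complex.ofReal hroot

/-- In integers: `fib (2 k + 1) - 1` is `fib k * L (k + 1)` for even `k` and `L k * fib (k + 1)` for
odd `k`, where `L` are the Lucas numbers. -/
lemma one_sub_one_div_fib_odd (k : ℕ) :
    1 - 1 / (Nat.fib (2 * k + 1) : ℝ) =
      (1 - goldenNome ^ k) * (1 - goldenNome ^ (k + 1)) / (1 + goldenNome ^ (2 * k + 1)) := by
  have hne : 1 + goldenNome ^ (2 * k + 1) ≠ 0 := by
    have := goldenNome_pos
    positivity
  rw [one_div_fib, Odd.neg_one_pow ⟨k, rfl⟩, pow_mul, ← goldenNome, neg_one_mul, sub_neg_eq_add,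
    one_sub_div hne]
  congr 1
  simp only [goldenNome, ← pow_mul]
  linear_combination β ^ (2 * k) * -β_sq

lemma one_sub_one_div_fib_even (k : ℕ) :
    1 - 1 / (Nat.fib (2 * k + 2) : ℝ) = (1 - goldenNome ^ k) * (1 + goldenNome ^ (k + 2)) /
      ((1 - goldenNome ^ (k + 1)) * (1 + goldenNome ^ (k + 1))) := by
  have hne : 1 - goldenNome ^ (2 * k + 2) ≠ 0 :=
    (sub_pos.2 (pow_lt_one₀ goldenNome_pos.le goldenNome_lt_one (by omega))).ne'
  rw [one_div_fib, Even.neg_one_pow ⟨k + 1, by ring⟩, pow_mul, ← goldenNome, one_mul,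
    one_sub_div hne]
  congr 1
  · simp only [goldenNome, ← pow_mul]
    linear_combination β ^ (2 * k) * (-(1 + β + β ^ 2) * β_sq)
  · ring

lemma one_sub_one_div_F_mul (m : ℕ) :
    (1 - 1 / (F (2 * m + 3) : ℝ)) * (1 - 1 / (F (2 * m + 4) : ℝ)) *
        ((1 + goldenNome ^ (m + 2)) * (1 + goldenNome ^ (2 * m + 5))) =
      (1 - goldenNome ^ (m + 1)) * (1 - goldenNome ^ (m + 3)) * (1 + goldenNome ^ (m + 3)) := by
  have := goldenNome_pos
  have h1 : 1 - goldenNome ^ (m + 2) ≠ 0 :=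
    (sub_pos.2 (pow_lt_one₀ goldenNome_pos.le goldenNome_lt_one (by omega))).ne'
  have h2 : 1 + goldenNome ^ (m + 2) ≠ 0 := by positivity
  have h3 : 1 + goldenNome ^ (2 * m + 5) ≠ 0 := by positivity
  have heven := one_sub_one_div_fib_even (m + 1)
  have hodd := one_sub_one_div_fib_odd (m + 2)
  rw [show F (2 * m + 3) = Nat.fib (2 * (m + 1) + 2) from F_eq_fib _,
    show F (2 * m + 4) = Nat.fib (2 * (m + 2) + 1) from F_eq_fib _, heven, hodd]
  simp only [add_assoc, Nat.reduceAdd, mul_add, Nat.reduceMul]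
  field_simp

lemma prod_one_sub_one_div_F_mul (M : ℕ) :
    (∏ n ∈ Finset.Icc 3 (2 * M + 2), (1 - 1 / (F n : ℝ))) *
        ((1 - goldenNome) * (1 - goldenNome ^ 2) * (1 + goldenNome ^ 2) *
          ∏ i ∈ Finset.range (M + 2), (1 + goldenNome ^ (2 * i + 1))) =
      (∏ i ∈ Finset.range M, (1 - goldenNome ^ (i + 1))) *
        (∏ i ∈ Finset.range (M + 2), (1 - goldenNome ^ (i + 1))) * (1 + goldenNome ^ (M + 2)) *
        ((1 + goldenNome) * (1 + goldenNome ^ 3)) := by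
  induction M with
  | zero => simp [Finset.prod_range_succ]
  | succ M ih =>
    have hne : 1 + goldenNome ^ (M + 2) ≠ 0 := by
      have := goldenNome_pos
      positivity
    rw [show 2 * (M + 1) + 2 = 2 * M + 2 + 1 + 1 by ring, Finset.prod_Icc_succ_top (by omega),
      Finset.prod_Icc_succ_top (by omega), show M + 1 + 2 = M + 2 + 1 by ring,
      Finset.prod_range_succ _ M, Finset.prod_range_succ _ (M + 2),
      Finset.prod_range_succ _ (M + 2), show 2 * (M + 2) + 1 = 2 * M + 5 by ring]
    refine mul_left_cancel₀ hne ?_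
    linear_combination ((1 - 1 / (F (2 * M + 3) : ℝ)) * (1 - 1 / (F (2 * M + 4) : ℝ)) *
      ((1 + goldenNome ^ (M + 2)) * (1 + goldenNome ^ (2 * M + 5)))) * ih +
      (∏ i ∈ Finset.range M, (1 - goldenNome ^ (i + 1))) *
        (∏ i ∈ Finset.range (M + 2), (1 - goldenNome ^ (i + 1))) * (1 + goldenNome ^ (M + 2)) *
        ((1 + goldenNome) * (1 + goldenNome ^ 3)) * one_sub_one_div_F_mul M

lemma mul_eulerProd_eq {ξ : ℝ}
    (hξ : Tendsto (fun N : ℕ => ∏ n ∈ Finset.Icc 3 N, (1 - 1 / (F n : ℝ))) atTop (𝓝 ξ)) :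
    (ξ : ℂ) * ((1 - goldenNome) * (1 - goldenNome ^ 2) * (1 + goldenNome ^ 2) *
        (eulerProd (goldenNome ^ 2) ^ 2 / (eulerProd goldenNome * eulerProd (goldenNome ^ 4)))) =
      eulerProd goldenNome * eulerProd goldenNome *
        ((1 + goldenNome) * (1 + goldenNome ^ 3)) := by
  have hq := norm_goldenNome_lt_one
  have hadd : Tendsto (fun M : ℕ => M + 2) atTop atTop := tendsto_add_atTop_nat 2
  have htwo : Tendsto (fun M : ℕ => 2 * M + 2) atTop atTop :=
    hadd.comp (tendsto_id.const_mul_atTop' two_pos)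
  have hone : Tendsto (fun M : ℕ => 1 + (goldenNome : ℂ) ^ (M + 2)) atTop (𝓝 (1 + 0)) :=
    ((tendsto_pow_atTop_nhds_zero_of_norm_lt_one hq).comp hadd).const_add 1
  have hleft := ((Complex.continuous_ofReal.tendsto ξ).comp (hξ.comp htwo)).mul
    (((tendsto_prod_one_add_pow_odd hq).comp hadd).const_mul
      ((1 - (goldenNome : ℂ)) * (1 - (goldenNome : ℂ) ^ 2) * (1 + (goldenNome : ℂ) ^ 2)))
  have hright := (((tendsto_prod_one_sub_pow hq).mul
    ((tendsto_prod_one_sub_pow hq).comp hadd)).mul hone).mul_const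
      ((1 + (goldenNome : ℂ)) * (1 + (goldenNome : ℂ) ^ 3))
  rw [add_zero, mul_one] at hright
  refine tendsto_nhds_unique hleft (hright.congr fun M => ?_)
  simpa using (congrArg Complex.ofReal (prod_one_sub_one_div_F_mul M)).symm

lemma discQuot_eq_mul_pow {z : ℂ} (hz : ‖z‖ < 1) :
    discQuot z = z ^ 3 * (eulerProd z ^ 3 * eulerProd (z ^ 4) / eulerProd (z ^ 2) ^ 2) ^ 24 := by
  rw [discQuot, qDisc_eq_mul_eulerProd_pow hz,
    qDisc_eq_mul_eulerProd_pow (norm_pow_lt_one hz two_ne_zero),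
    qDisc_eq_mul_eulerProd_pow (norm_pow_lt_one hz four_ne_zero)]
  have := eulerProd_ne_zero (norm_pow_lt_one hz two_ne_zero)
  rcases eq_or_ne z 0 with rfl | hz0
  · simp
  · field_simp

lemma isAlgebraic_discQuot_goldenNome {ξ : ℝ}
    (hξ : Tendsto (fun N : ℕ => ∏ n ∈ Finset.Icc 3 N, (1 - 1 / (F n : ℝ))) atTop (𝓝 ξ))
    (halg : IsAlgebraic ℚ ξ) : IsAlgebraic ℚ (discQuot goldenNome) := by
  have hq : IsAlgebraic ℚ (goldenNome : ℂ) :=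
    (isIntegral_goldenNome.tower_top (A := ℚ)).isAlgebraic
  have hadd (n : ℕ) : IsAlgebraic ℚ (1 + (goldenNome : ℂ) ^ n) := isAlgebraic_one.add (hq.pow n)
  have hsub (n : ℕ) : IsAlgebraic ℚ (1 - (goldenNome : ℂ) ^ n) := isAlgebraic_one.sub (hq.pow n)
  have hne (n : ℕ) : 1 + (goldenNome : ℂ) ^ n ≠ 0 := by
    have := goldenNome_pos
    exact_mod_cast (by positivity : 1 + goldenNome ^ n ≠ 0)
  have hE {d : ℕ} (hd : d ≠ 0) := eulerProd_ne_zero (norm_pow_lt_one norm_goldenNome_lt_one hd)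
  have hquot : eulerProd goldenNome ^ 3 * eulerProd (goldenNome ^ 4) /
      eulerProd (goldenNome ^ 2) ^ 2 =
      ξ * ((1 - goldenNome ^ 1) * (1 - goldenNome ^ 2) * (1 + goldenNome ^ 2)) *
        ((1 + (goldenNome : ℂ) ^ 1) * (1 + (goldenNome : ℂ) ^ 3))⁻¹ := by
    have h1 := eulerProd_ne_zero norm_goldenNome_lt_one
    have h2 := hE two_ne_zero
    have h4 := hE four_ne_zero
    have heq := mul_eulerProd_eq hξ
    have hne1 : 1 + (goldenNome : ℂ) ≠ 0 := by simpa only [pow_one] using hne 1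
    field_simp [hne1, hne 3] at heq ⊢
    linear_combination -heq
  rw [discQuot_eq_mul_pow norm_goldenNome_lt_one, hquot]
  exact (hq.pow 3).mul (((halg.algebraMap.mul (((hsub 1).mul (hsub 2)).mul (hadd 2))).mul
    ((hadd 1).mul (hadd 3)).inv).pow 24)

end FibonacciProduct

end Xi2

theorem xi2_transcendental (ξ2 : ℝ)
    (h2 : Filter.Tendsto (fun N : ℕ => ∏ n ∈ Finset.Icc 3 N, (1 - 1 / (F n : ℝ)))
      Filter.atTop (nhds ξ2)) :
    Transcendental ℚ ξ2 := by
  intro halg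
  exact Xi2.transcendental_discQuot Xi2.isIntegral_goldenNome
    (Complex.ofReal_ne_zero.2 Xi2.goldenNome_pos.ne') Xi2.norm_goldenNome_lt_one
    (Xi2.isAlgebraic_discQuot_goldenNome h2 halg)
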